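/- Let f : ℝ^{m-1} × ℝ^m → ℝ be continuous and bounded on ℝ^{m-1} × (closed unit ball), such that for each x′ ∈ ℝ^{m-1} the function u ↦ f(x′,u) coincides on the closed unit ball with an element of ℋ_k. Then g = P_H[f] is infinitely differentiable on ℝ^m_+ × 𝔹^m, satisfies 𝒟_k g = 0 in ℝ^m_+ × 𝔹^m, and there exists a constant a_{m,k} > 0 depending only on m and k such that sup_{ℝ^m_+ × 𝔹^m} |g| ≤ a_{m,k} · sup_{ℝ^{m-1} × 𝔹^m} |f|. -/

import Mathlib

noncomputable section

open MeasureTheory Metric Filter Topology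
open scoped RealInnerProductSpace

/-- `ℝ^m` as a Euclidean space. -/
abbrev Evec (m : ℕ) : Type := EuclideanSpace ℝ (Fin m)

/-- Partial derivative in the `i`-th coordinate direction. -/
def pdv {m : ℕ} (i : Fin m) (f : Evec m → ℝ) (x : Evec m) : ℝ :=
  fderiv ℝ f x (EuclideanSpace.single i 1)

/-- Euclidean Laplacian on `ℝ^m`. -/
def lapl {m : ℕ} (f : Evec m → ℝ) (x : Evec m) : ℝ :=
  ∑ i : Fin m, pdv i (pdv i f) x

/-- `p` is a real-valued polynomial function on `ℝ^m`, homogeneous of degree `k` and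
harmonic; i.e. `p ∈ ℋ_k`. -/
def IsHk (m k : ℕ) (p : Evec m → ℝ) : Prop :=
  (∃ P : MvPolynomial (Fin m) ℝ, ∀ x : Evec m, p x = MvPolynomial.eval (fun i => x i) P) ∧
  (∀ (c : ℝ) (x : Evec m), p (c • x) = c ^ k * p x) ∧
  (∀ x : Evec m, lapl p x = 0)

/-- The surface measure `dS` on the unit sphere `𝕊^{m-1}`, as a measure on `ℝ^m`. -/
def sphereM (m : ℕ) : Measure (Evec m) :=
  Measure.map Subtype.val ((volume : Measure (Evec m)).toSphere)

/-- `ω_m`, the surface area of the unit sphere `𝕊^{m-1}`. -/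
def omegaS (m : ℕ) : ℝ := (sphereM m Set.univ).toReal

/-- The constant `c_{m,k} = 2(m+2k-2)/((m-2)ω_m)`. -/
def cmk (m k : ℕ) : ℝ := 2 * ((m : ℝ) + 2 * k - 2) / (((m : ℝ) - 2) * omegaS m)

/-- The reflection `R_a(u) = u - 2⟨a,u⟩a/|a|²` (in Clifford notation `a u a/|a|²`). -/
def reflv {m : ℕ} (a u : Evec m) : Evec m :=
  u - (2 * ⟪a, u⟫ / ‖a‖ ^ 2) • a

/-- `dim ℋ_k`. -/
def hdim (m k : ℕ) : ℕ :=
  Nat.choose (m + k - 1) (m - 1) - Nat.choose (m + k - 3) (m - 1)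

/-- `Z` is the reproducing kernel `Z_k` of `ℋ_k` on the unit sphere: a symmetric,
rotation invariant kernel, bounded by `dim ℋ_k` on the unit ball, belonging to `ℋ_k`
in the first variable and reproducing elements of `ℋ_k` from their spherical values. -/
def IsZk (m k : ℕ) (Z : Evec m → Evec m → ℝ) : Prop :=
  (∀ v : Evec m, IsHk m k (fun u => Z u v)) ∧
  (∀ p : Evec m → ℝ, IsHk m k p → ∀ v : Evec m, (∫ u, Z u v * p u ∂(sphereM m)) = p v) ∧
  (∀ u v : Evec m, Z u v = Z v u) ∧
  (∀ u v : Evec m, ‖u‖ ≤ 1 → ‖v‖ ≤ 1 → |Z u v| ≤ (hdim m k : ℝ)) ∧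
  (∀ (A : Evec m ≃ₗᵢ[ℝ] Evec m) (u v : Evec m), Z (A u) (A v) = Z u v)

/-- The point `(x', y) ∈ ℝ^{d+1}` with first `d` coordinates `x'` and last coordinate `y`. -/
def upP (d : ℕ) (x' : Evec d) (y : ℝ) : Evec (d + 1) :=
  (EuclideanSpace.equiv (Fin (d + 1)) ℝ).symm
    (Fin.snoc (⇑(EuclideanSpace.equiv (Fin d) ℝ) x') y)

/-- The first `d` coordinates of a point of `ℝ^{d+1}`. -/
def downP (d : ℕ) (x : Evec (d + 1)) : Evec d :=
  (EuclideanSpace.equiv (Fin d) ℝ).symm (fun i => x (Fin.castSucc i))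

/-- The last coordinate of a point of `ℝ^{d+1}`. -/
def lastP (d : ℕ) (x : Evec (d + 1)) : ℝ := x (Fin.last d)

/-- The Poisson kernel `P_H` for bosonic Laplacians in the upper half-space `ℝ^{d+1}_+`,
`P_H(x,t,u,v) = c_{m,k} (y/|x-t|^m) Z_k(R_{x-t}(u), v)` with `m = d+1`, `x = (x',y)`,
`t = (t',0)`. -/
def PH (d k : ℕ) (Z : Evec (d + 1) → Evec (d + 1) → ℝ) (x' : Evec d) (y : ℝ)
    (t' : Evec d) (u v : Evec (d + 1)) : ℝ :=
  cmk (d + 1) k * (y / ‖upP d x' y - upP d t' 0‖ ^ (d + 1)) *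
    Z (reflv (upP d x' y - upP d t' 0) u) v

/-- The Poisson integral `P_H[f]` in the upper half-space. -/
def PHint (d k : ℕ) (Z : Evec (d + 1) → Evec (d + 1) → ℝ)
    (f : Evec d → Evec (d + 1) → ℝ) (x' : Evec d) (y : ℝ) (v : Evec (d + 1)) : ℝ :=
  ∫ t' : Evec d, (∫ u, PH d k Z x' y t' u v * f t' u ∂(sphereM (d + 1)))

/-- The Poisson kernel `P_B` for bosonic Laplacians in the unit ball. -/
def PB (m k : ℕ) (Z : Evec m → Evec m → ℝ) (x ζ ω ν : Evec m) : ℝ :=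
  (cmk m k / 2) * ((1 - ‖x‖ ^ 2) / ‖x - ζ‖ ^ m) * Z (reflv (x - ζ) ω) ν

/-- The Poisson integral `P_B[h]` in the unit ball. -/
def PBint (m k : ℕ) (Z : Evec m → Evec m → ℝ) (h : Evec m → Evec m → ℝ)
    (x ν : Evec m) : ℝ :=
  ∫ ζ, (∫ ω, PB m k Z x ζ ω ν * h ζ ω ∂(sphereM m)) ∂(sphereM m)

/-- Partial derivative in the first (`x`) variable. -/
def pd1 {m : ℕ} (i : Fin m) (f : Evec m → Evec m → ℝ) : Evec m → Evec m → ℝ :=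
  fun x u => fderiv ℝ (fun x₁ => f x₁ u) x (EuclideanSpace.single i 1)

/-- Partial derivative in the second (`u`) variable. -/
def pd2 {m : ℕ} (i : Fin m) (f : Evec m → Evec m → ℝ) : Evec m → Evec m → ℝ :=
  fun x u => fderiv ℝ (fun u₁ => f x u₁) u (EuclideanSpace.single i 1)

/-- The bosonic Laplacian `𝒟_k`. -/
def Dk (m k : ℕ) (f : Evec m → Evec m → ℝ) : Evec m → Evec m → ℝ := fun x u =>
  (∑ i : Fin m, pd1 i (pd1 i f) x u)
    - (4 / ((m : ℝ) + 2 * k - 2)) *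
        ∑ i : Fin m, ∑ j : Fin m, u i * pd1 i (pd2 j (pd1 j f)) x u
    + (4 * ‖u‖ ^ 2 / (((m : ℝ) + 2 * k - 2) * ((m : ℝ) + 2 * k - 4))) *
        ∑ i : Fin m, ∑ j : Fin m, pd2 i (pd1 i (pd2 j (pd1 j f))) x u

/-- `f ∈ C²(Ω×𝔹^m, ℋ_k)`: twice continuously differentiable on `Ω × 𝔹^m` and, for each
fixed `x ∈ Ω`, coinciding in the second variable with an element of `ℋ_k`. -/
def C2Hk (m k : ℕ) (Ω : Set (Evec m)) (f : Evec m → Evec m → ℝ) : Prop :=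
  ContDiffOn ℝ 2 (fun q : Evec m × Evec m => f q.1 q.2) (Ω ×ˢ ball (0 : Evec m) 1) ∧
  ∀ x ∈ Ω, ∃ q, IsHk m k q ∧ ∀ u ∈ closedBall (0 : Evec m) 1, f x u = q u

/-- The `L^p` norm `(∫_{ℝ^{m-1}} ∫_{𝕊^{m-1}} |f(x',u)|^p dS(u) dx')^{1/p}` (`m = d+1`),
valued in `ℝ≥0∞`. -/
def lpH (d : ℕ) (p : ℝ) (f : Evec d → Evec (d + 1) → ℝ) : ENNReal :=
  (∫⁻ x' : Evec d, ∫⁻ u, ENNReal.ofReal (|f x' u| ^ p) ∂(sphereM (d + 1))) ^ (1 / p)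

/-- `f ∈ L^p(ℝ^{m-1}×𝔹^m, ℋ_k)` (`m = d+1`). -/
def MemLpH (d k : ℕ) (p : ℝ) (f : Evec d → Evec (d + 1) → ℝ) : Prop :=
  Measurable (fun q : Evec d × Evec (d + 1) => f q.1 q.2) ∧
  (∀ x' : Evec d, ∃ q, IsHk (d + 1) k q ∧
    ∀ u ∈ closedBall (0 : Evec (d + 1)) 1, f x' u = q u) ∧
  lpH d p f < ⊤

/-- The `L^p` norm `(∫_{𝕊^{m-1}} ∫_{𝕊^{m-1}} |h(ζ,ω)|^p dS(ω) dS(ζ))^{1/p}`,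
valued in `ℝ≥0∞`. -/
def lpS (m : ℕ) (p : ℝ) (h : Evec m → Evec m → ℝ) : ENNReal :=
  (∫⁻ ζ, ∫⁻ ω, ENNReal.ofReal (|h ζ ω| ^ p) ∂(sphereM m) ∂(sphereM m)) ^ (1 / p)

/-- `h ∈ L^p(𝕊^{m-1}×𝔹^m, ℋ_k)`. -/
def MemLpS (m k : ℕ) (p : ℝ) (h : Evec m → Evec m → ℝ) : Prop :=
  Measurable (fun q : Evec m × Evec m => h q.1 q.2) ∧
  (∀ ζ : Evec m, ‖ζ‖ = 1 → ∃ q, IsHk m k q ∧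
    ∀ ω ∈ closedBall (0 : Evec m) 1, h ζ ω = q ω) ∧
  lpS m p h < ⊤

/-- Iterated partial derivative `D_x^α` in the first variable, for a multi-index `α ∈ ℕ^m`. -/
def Dx {m : ℕ} (α : Fin m → ℕ) (f : Evec m → Evec m → ℝ) : Evec m → Evec m → ℝ :=
  (List.finRange m).foldr (fun i g => (pd1 i)^[α i] g) f

/-- Iterated partial derivative `D_ν^β` in the second variable, for a multi-index `β ∈ ℕ^m`. -/
def Dv {m : ℕ} (β : Fin m → ℕ) (f : Evec m → Evec m → ℝ) : Evec m → Evec m → ℝ :=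
  (List.finRange m).foldr (fun i g => (pd2 i)^[β i] g) f

/-- `f` is differentiable at `x` and its `i`-th partial derivative there is `c`. -/
def HasPdvAt {m : ℕ} (i : Fin m) (f : Evec m → ℝ) (x : Evec m) (c : ℝ) : Prop :=
  DifferentiableAt ℝ f x ∧ pdv i f x = c

namespace HasPdvAt

variable {m : ℕ} {i : Fin m} {f g : Evec m → ℝ} {x : Evec m} {c c' : ℝ}

theorem of_hasFDerivAt {L : Evec m →L[ℝ] ℝ} (h : HasFDerivAt f L x)
    (hc : L (EuclideanSpace.single i 1) = c) : HasPdvAt i f x c :=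
  ⟨h.differentiableAt, by rw [pdv, h.fderiv, hc]⟩

theorem of_differentiableAt (h : DifferentiableAt ℝ f x) : HasPdvAt i f x (pdv i f x) := ⟨h, rfl⟩

theorem congr_val (h : HasPdvAt i f x c) (hc : c = c') : HasPdvAt i f x c' := hc ▸ h

theorem congr_of_eventuallyEq (h : HasPdvAt i f x c) (hg : g =ᶠ[𝓝 x] f) : HasPdvAt i g x c :=
  ⟨h.1.congr_of_eventuallyEq hg, by rw [← h.2, pdv, pdv, hg.fderiv_eq]⟩

theorem const (a : ℝ) : HasPdvAt i (fun _ => a) x 0 :=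
  of_hasFDerivAt (hasFDerivAt_const a x) (by simp)

theorem coord (j : Fin m) : HasPdvAt i (fun x => x j) x (if i = j then 1 else 0) := by
  refine of_hasFDerivAt (EuclideanSpace.proj (𝕜 := ℝ) j).hasFDerivAt ?_
  simp [eq_comm]

theorem add (hf : HasPdvAt i f x c) (hg : HasPdvAt i g x c') :
    HasPdvAt i (fun x => f x + g x) x (c + c') :=
  of_hasFDerivAt (hf.1.hasFDerivAt.add hg.1.hasFDerivAt) (by
    rw [← hf.2, ← hg.2]; rfl)

theorem sub (hf : HasPdvAt i f x c) (hg : HasPdvAt i g x c') :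
    HasPdvAt i (fun x => f x - g x) x (c - c') :=
  of_hasFDerivAt (hf.1.hasFDerivAt.sub hg.1.hasFDerivAt) (by
    rw [← hf.2, ← hg.2]; rfl)

theorem mul (hf : HasPdvAt i f x c) (hg : HasPdvAt i g x c') :
    HasPdvAt i (fun x => f x * g x) x (c * g x + f x * c') :=
  of_hasFDerivAt (hf.1.hasFDerivAt.mul hg.1.hasFDerivAt) (by
    rw [← hf.2, ← hg.2]
    simp only [pdv, _root_.add_apply, _root_.smul_apply, smul_eq_mul]
    ring)

theorem const_mul (a : ℝ) (hf : HasPdvAt i f x c) :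
    HasPdvAt i (fun x => a * f x) x (a * c) :=
  ((const a).mul hf).congr_val (by ring)

theorem sum {ι : Type*} {s : Finset ι} {f : ι → Evec m → ℝ} {c : ι → ℝ}
    (h : ∀ a ∈ s, HasPdvAt i (f a) x (c a)) :
    HasPdvAt i (fun x => ∑ a ∈ s, f a x) x (∑ a ∈ s, c a) := by
  refine of_hasFDerivAt (HasFDerivAt.fun_sum fun a ha => (h a ha).1.hasFDerivAt) ?_
  rw [_root_.sum_apply]
  exact Finset.sum_congr rfl fun a ha => (h a ha).2

theorem inv_norm_pow (hx : x ≠ 0) (N : ℕ) :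
    HasPdvAt i (fun x => (‖x‖ ^ N)⁻¹) x (-(N * x i * (‖x‖ ^ (N + 2))⁻¹)) := by
  have hn : ‖x‖ ≠ 0 := norm_ne_zero_iff.2 hx
  have hsq : HasFDerivAt (fun x : Evec m => ‖x‖ ^ 2) (2 • innerSL ℝ x) x :=
    (hasStrictFDerivAt_norm_sq x).hasFDerivAt
  have hr : HasFDerivAt (fun x : Evec m => √(‖x‖ ^ 2)) _ x := hsq.sqrt (by positivity)
  simp only [Real.sqrt_sq (norm_nonneg _)] at hr
  have hd := (hasDerivAt_pow N ‖x‖).fun_inv (pow_ne_zero N hn)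
  refine of_hasFDerivAt (hd.comp_hasFDerivAt x hr) ?_
  simp only [_root_.smul_apply, innerSL_apply_apply, smul_eq_mul, nsmul_eq_mul,
    EuclideanSpace.inner_single_right]
  rcases N with _ | N
  · simp
  · simp only [Nat.add_sub_cancel, conj_trivial]
    push_cast
    field_simp
    ring

end HasPdvAt

section Reflection

variable {m : ℕ}

theorem reflv_apply (x v : Evec m) (a : Fin m) :
    reflv x v a = v a - 2 * ⟪x, v⟫ / ‖x‖ ^ 2 * x a := by
  simp [reflv]

theorem inner_reflv_self {x : Evec m} (hx : x ≠ 0) (v : Evec m) : ⟪x, reflv x v⟫ = -⟪x, v⟫ := by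
  have hn : ‖x‖ ≠ 0 := norm_ne_zero_iff.2 hx
  rw [reflv, inner_sub_right, inner_smul_right, real_inner_self_eq_norm_sq]
  field_simp
  ring

theorem reflv_eq_reflection (x : Evec m) :
    reflv x = (ℝ ∙ x)ᗮ.reflection := by
  ext1 v
  rw [Submodule.reflection_orthogonal_apply, Submodule.reflection_singleton_apply, reflv]
  rw [neg_sub, ← Nat.cast_smul_eq_nsmul ℝ, smul_smul]
  congr 2
  simp [mul_div_assoc]

theorem norm_reflv (x v : Evec m) : ‖reflv x v‖ = ‖v‖ := by
  rw [reflv_eq_reflection, LinearIsometryEquiv.norm_map]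

theorem reflv_reflv (x v : Evec m) : reflv x (reflv x v) = v := by
  rw [reflv_eq_reflection, Submodule.reflection_reflection]

theorem hasFDerivAt_reflv_left {x : Evec m} (hx : x ≠ 0) (v : Evec m) :
    ∃ L : Evec m →L[ℝ] Evec m, HasFDerivAt (fun x => reflv x v) L x ∧
      ∀ e, L e = (2 / ‖x‖ ^ 2) • (⟪x, reflv x v⟫ • e - ⟪reflv x v, e⟫ • x) := by
  have hn : ‖x‖ ≠ 0 := norm_ne_zero_iff.2 hx
  have hsq : HasFDerivAt (fun x : Evec m => ‖x‖ ^ 2) (2 • innerSL ℝ x) x :=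
    (hasStrictFDerivAt_norm_sq x).hasFDerivAt
  have hin : HasFDerivAt (fun x : Evec m => ⟪v, x⟫) (innerSL ℝ v) x :=
    (innerSL ℝ v).hasFDerivAt
  have hinv := (hasDerivAt_inv (pow_ne_zero 2 hn)).comp_hasFDerivAt x hsq
  have h := (hasFDerivAt_const v x).sub (((hin.const_mul 2).mul hinv).smul (hasFDerivAt_id x))
  refine ⟨_, (h.congr_of_eventuallyEq (Eventually.of_forall fun z => ?_)), fun e => ?_⟩
  · simp [reflv, real_inner_comm v z, div_eq_mul_inv]
  · rw [inner_reflv_self hx]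
    simp only [reflv, inner_sub_left, inner_smul_left]
    simp only [zero_sub, _root_.neg_apply, _root_.add_apply,
      _root_.smul_apply, ContinuousLinearMap.smulRight_apply, innerSL_apply_apply,
      smul_eq_mul, nsmul_eq_mul, ContinuousLinearMap.id_apply, id_eq, Pi.mul_apply,
      Function.comp_apply, real_inner_comm x v, conj_trivial]
    ext a
    simp
    field_simp
    ring

theorem hasFDerivAt_reflv_right (x v : Evec m) :
    HasFDerivAt (fun v => reflv x v)
      ((ℝ ∙ x)ᗮ.reflection.toContinuousLinearEquiv : Evec m →L[ℝ] Evec m) v := by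
  rw [reflv_eq_reflection]
  exact ((ℝ ∙ x)ᗮ.reflection.toContinuousLinearEquiv : Evec m →L[ℝ] Evec m).hasFDerivAt

theorem fderiv_apply_eq_sum_pdv (Q : Evec m → ℝ) (w x : Evec m) :
    fderiv ℝ Q w x = ∑ a, x a * pdv a Q w := by
  conv_lhs => rw [← (EuclideanSpace.basisFun (Fin m) ℝ).sum_repr x]
  simp [pdv]

theorem HasPdvAt.comp_reflv_left {Q : Evec m → ℝ} (hQ : Differentiable ℝ Q) (i : Fin m)
    {x : Evec m} (hx : x ≠ 0) (v : Evec m) :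
    HasPdvAt i (fun x => Q (reflv x v)) x
      (2 * (‖x‖ ^ 2)⁻¹ * (⟪x, reflv x v⟫ * pdv i Q (reflv x v)
        - reflv x v i * ∑ a, x a * pdv a Q (reflv x v))) := by
  obtain ⟨L, hL, hLe⟩ := hasFDerivAt_reflv_left hx v
  refine .of_hasFDerivAt ((hQ _).hasFDerivAt.comp x hL) ?_
  rw [ContinuousLinearMap.comp_apply, hLe, map_smul, map_sub, map_smul, map_smul,
    fderiv_apply_eq_sum_pdv Q _ x, EuclideanSpace.inner_single_right]
  simp [pdv, div_eq_mul_inv]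

theorem HasPdvAt.comp_reflv_right {Q : Evec m → ℝ} (hQ : Differentiable ℝ Q) (j : Fin m)
    (x v : Evec m) :
    HasPdvAt j (fun v => Q (reflv x v)) v
      (pdv j Q (reflv x v) - 2 * (‖x‖ ^ 2)⁻¹ * x j * ∑ a, x a * pdv a Q (reflv x v)) := by
  refine .of_hasFDerivAt ((hQ _).hasFDerivAt.comp v (hasFDerivAt_reflv_right x v)) ?_
  have : ((ℝ ∙ x)ᗮ.reflection.toContinuousLinearEquiv : Evec m →L[ℝ] Evec m)
      (EuclideanSpace.single j 1) = reflv x (EuclideanSpace.single j 1) := by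
    rw [reflv_eq_reflection]; rfl
  rw [ContinuousLinearMap.comp_apply, this, reflv.eq_def x (EuclideanSpace.single j 1), map_sub, map_smul,
    fderiv_apply_eq_sum_pdv Q _ x, EuclideanSpace.inner_single_right]
  simp only [pdv, div_eq_mul_inv, conj_trivial, smul_eq_mul]
  ring

theorem differentiable_coord (j : Fin m) : Differentiable ℝ (fun w : Evec m => w j) :=
  (EuclideanSpace.proj (𝕜 := ℝ) j).differentiable

theorem HasPdvAt.reflv_coord_left (i j : Fin m) {x : Evec m} (hx : x ≠ 0) (v : Evec m) :
    HasPdvAt i (fun x => reflv x v j) x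
      (2 * (‖x‖ ^ 2)⁻¹ * (⟪x, reflv x v⟫ * (if i = j then 1 else 0) - reflv x v i * x j)) := by
  have := HasPdvAt.comp_reflv_left (differentiable_coord j) i hx v
  refine this.congr_val ?_
  simp only [(HasPdvAt.coord j).2, mul_ite, mul_one, mul_zero, Finset.sum_ite_eq',
    Finset.mem_univ, if_true]

theorem HasPdvAt.reflv_coord_right (i j : Fin m) (x v : Evec m) :
    HasPdvAt i (fun v => reflv x v j) v
      ((if i = j then 1 else 0) - 2 * (‖x‖ ^ 2)⁻¹ * x i * x j) := by
  have := HasPdvAt.comp_reflv_right (differentiable_coord j) i x v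
  refine this.congr_val ?_
  simp only [(HasPdvAt.coord j).2, mul_ite, mul_one, mul_zero, Finset.sum_ite_eq',
    Finset.mem_univ, if_true]

theorem HasPdvAt.inner_reflv_left (i : Fin m) {x : Evec m} (hx : x ≠ 0) (v : Evec m) :
    HasPdvAt i (fun x => ⟪x, reflv x v⟫) x (-v i) := by
  have h : HasPdvAt i (fun x => -⟪v, x⟫) x (-v i) :=
    .of_hasFDerivAt (innerSL ℝ v).hasFDerivAt.neg
      (by simp [EuclideanSpace.inner_single_right])
  refine h.congr_of_eventuallyEq ?_
  filter_upwards [isOpen_ne.mem_nhds hx] with z hz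
  rw [inner_reflv_self hz, real_inner_comm]

theorem HasPdvAt.inner_reflv_right (i : Fin m) {x : Evec m} (hx : x ≠ 0) (v : Evec m) :
    HasPdvAt i (fun v => ⟪x, reflv x v⟫) v (-x i) := by
  have h : HasPdvAt i (fun v => -⟪x, v⟫) v (-x i) :=
    .of_hasFDerivAt (innerSL ℝ x).hasFDerivAt.neg
      (by simp [EuclideanSpace.inner_single_right])
  exact h.congr_of_eventuallyEq (Eventually.of_forall fun z => inner_reflv_self hx z)

end Reflection

theorem two_le_coe_top : (2 : WithTop ℕ∞) ≤ ((⊤ : ℕ∞) : WithTop ℕ∞) :=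
  WithTop.coe_le_coe.2 (le_top : (2 : ℕ∞) ≤ ⊤)

section Harmonic

variable {m : ℕ}

theorem contDiff_pdv {Q : Evec m → ℝ} (hQ : ContDiff ℝ (⊤ : ℕ∞) Q) (a : Fin m) :
    ContDiff ℝ (⊤ : ℕ∞) (pdv a Q) :=
  (hQ.fderiv_right (m := (⊤ : ℕ∞)) (by simp)).clm_apply contDiff_const

theorem pdv_comm {Q : Evec m → ℝ} {w : Evec m} (hQ : ContDiffAt ℝ 2 Q w) (a b : Fin m) :
    pdv a (pdv b Q) w = pdv b (pdv a Q) w := by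
  have hd : DifferentiableAt ℝ (fderiv ℝ Q) w :=
    (hQ.fderiv_right (m := 1) (by norm_num)).differentiableAt (by norm_num)
  have key : ∀ a b : Fin m, pdv a (pdv b Q) w
      = fderiv ℝ (fderiv ℝ Q) w (EuclideanSpace.single a 1) (EuclideanSpace.single b 1) := by
    intro a b
    have := hd.hasFDerivAt.clm_apply (hasFDerivAt_const (EuclideanSpace.single b (1 : ℝ)) w)
    change fderiv ℝ (fun y => fderiv ℝ Q y (EuclideanSpace.single b 1)) w _ = _
    rw [this.fderiv]
    simp
  rw [key, key]
  exact (hQ.isSymmSndFDerivAt (by simp)).eq _ _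

/-- Smooth harmonic functions satisfying Euler's identity with exponent `κ`. -/
structure EulerHarmonic (κ : ℝ) (Q : Evec m → ℝ) : Prop where
  contDiff : ContDiff ℝ (⊤ : ℕ∞) Q
  euler : ∀ w, ∑ j, w j * pdv j Q w = κ * Q w
  harmonic : ∀ w, lapl Q w = 0

variable {κ : ℝ} {Q : Evec m → ℝ}

theorem EulerHarmonic.differentiable (hQ : EulerHarmonic κ Q) : Differentiable ℝ Q :=
  hQ.contDiff.differentiable (by simp)

theorem EulerHarmonic.pdv_pdv_comm (hQ : EulerHarmonic κ Q) (a b : Fin m) (w : Evec m) :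
    pdv a (pdv b Q) w = pdv b (pdv a Q) w :=
  pdv_comm (hQ.contDiff.contDiffAt.of_le two_le_coe_top) a b

theorem EulerHarmonic.partial_deriv (hQ : EulerHarmonic κ Q) (a : Fin m) :
    EulerHarmonic (κ - 1) (pdv a Q) := by
  have hdiff : ∀ b, Differentiable ℝ (pdv b Q) := fun b =>
    (contDiff_pdv hQ.contDiff b).differentiable (by simp)
  refine ⟨contDiff_pdv hQ.contDiff a, fun w => ?_, fun w => ?_⟩
  · have h1 : HasPdvAt a (fun w => ∑ j, w j * pdv j Q w) w
        (∑ j, ((if a = j then 1 else 0) * pdv j Q w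
          + w j * pdv a (pdv j Q) w)) :=
      .sum fun j _ => (HasPdvAt.coord j).mul (.of_differentiableAt (hdiff j w))
    have h2 : HasPdvAt a (fun w => κ * Q w) w (κ * pdv a Q w) :=
      .const_mul κ (.of_differentiableAt (hQ.differentiable w))
    have h3 := h1.2.symm.trans ((congrArg (fun g => pdv a g w) (funext hQ.euler)).trans h2.2)
    rw [Finset.sum_add_distrib] at h3
    simp only [ite_mul, one_mul, zero_mul, Finset.sum_ite_eq, Finset.mem_univ, if_true] at h3
    simp only [fun j => hQ.pdv_pdv_comm j a w]
    linarith
  · have h1 : HasPdvAt a (fun w => ∑ j, pdv j (pdv j Q) w) w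
        (∑ j, pdv a (pdv j (pdv j Q)) w) :=
      .sum fun j _ => .of_differentiableAt
        ((contDiff_pdv (contDiff_pdv hQ.contDiff j) j).differentiable (by simp) w)
    have h2 := h1.2.symm.trans ((congrArg (fun g => pdv a g w) (funext hQ.harmonic)).trans
      (HasPdvAt.const (0 : ℝ)).2)
    rw [lapl, ← h2]
    refine Finset.sum_congr rfl fun j _ => ?_
    rw [pdv_comm ((contDiff_pdv hQ.contDiff j).contDiffAt.of_le two_le_coe_top) a j,
      show pdv a (pdv j Q) = pdv j (pdv a Q) from
        funext fun w => hQ.pdv_pdv_comm a j w]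

theorem EulerHarmonic.euler_pdv (hQ : EulerHarmonic κ Q) (a : Fin m) (w : Evec m) :
    ∑ j, w j * pdv j (pdv a Q) w = (κ - 1) * pdv a Q w :=
  (hQ.partial_deriv a).euler w

end Harmonic

section Algebra

variable {m : ℕ}

theorem sum_coord_sq (x : Evec m) : ∑ j, x j * x j = ‖x‖ ^ 2 := by
  rw [EuclideanSpace.real_norm_sq_eq]; simp [sq]

theorem sum_mul_coord (x w : Evec m) : ∑ j, x j * w j = ⟪x, w⟫ := by
  rw [PiLp.inner_apply]; simp [mul_comm]

end Algebra

section Kernel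

variable {m : ℕ} {κ e : ℝ} {Q α : Evec m → ℝ}

theorem EulerHarmonic.sum_sum_euler (hQ : EulerHarmonic κ Q) (x w : Evec m) :
    ∑ j, w j * ∑ a, x a * pdv a (pdv j Q) w = (κ - 1) * ∑ a, x a * pdv a Q w := by
  simp only [Finset.mul_sum]
  rw [Finset.sum_comm]
  refine Finset.sum_congr rfl fun a _ => ?_
  rw [← mul_assoc, mul_comm (κ - 1), mul_assoc, ← hQ.euler_pdv a w, Finset.mul_sum]
  refine Finset.sum_congr rfl fun j _ => ?_
  rw [hQ.pdv_pdv_comm]; ring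

/-- The partial derivative in `x` of `α(x) Q(R_x v)`. -/
theorem HasPdvAt.mul_comp_reflv_left (hQ : EulerHarmonic κ Q) {i : Fin m} {x : Evec m}
    (hx : x ≠ 0) (v : Evec m) {c : ℝ} (hα : HasPdvAt i α x c) :
    HasPdvAt i (fun x => α x * Q (reflv x v)) x
      (c * Q (reflv x v) + α x * (2 * (‖x‖ ^ 2)⁻¹) * (⟪x, reflv x v⟫ * pdv i Q (reflv x v)
        - reflv x v i * ∑ a, x a * pdv a Q (reflv x v))) :=
  (hα.mul (.comp_reflv_left hQ.differentiable i hx v)).congr_val (by ring)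

/-- The mixed divergence `⟨D_v, D_x⟩` of `α(x) Q(R_x v)`. -/
theorem sum_pd2_pd1_mul_comp_reflv (hQ : EulerHarmonic κ Q) {x : Evec m} (hx : x ≠ 0)
    (v : Evec m) {α' : Fin m → ℝ} (hα : ∀ j, HasPdvAt j α x (α' j))
    (he : ∑ j, x j * α' j = e * α x) :
    ∑ j, pd2 j (pd1 j fun x v => α x * Q (reflv x v)) x v
      = ∑ a, (α' a - 2 * (‖x‖ ^ 2)⁻¹ * (m + κ - 2 + e) * x a * α x) * pdv a Q (reflv x v) := by
  have hn : ‖x‖ ^ 2 ≠ 0 := by simpa using hx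
  have hdiff : ∀ b, Differentiable ℝ (pdv b Q) := fun b => (hQ.partial_deriv b).differentiable
  set w := reflv x v with hw
  set ρ := (‖x‖ ^ 2)⁻¹ with hρ
  set σ := ⟪x, w⟫ with hσ
  set X := ∑ a, x a * pdv a Q w with hX
  set H : Fin m → ℝ := fun j => ∑ a, x a * pdv a (pdv j Q) w with hH
  have key : ∀ j, pd2 j (pd1 j fun x v => α x * Q (reflv x v)) x v
      = α' j * (pdv j Q w - 2 * ρ * x j * X) + α x * (2 * ρ) *
        (-x j * pdv j Q w + σ * (pdv j (pdv j Q) w - 2 * ρ * x j * H j)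
          - ((1 - 2 * ρ * x j * x j) * X
            + w j * (H j - 2 * ρ * x j * ∑ a, x a * H a))) := by
    intro j
    have h1 : (fun v => pd1 j (fun x v => α x * Q (reflv x v)) x v) = fun v =>
        α' j * Q (reflv x v) + α x * (2 * ρ) * (⟪x, reflv x v⟫ * pdv j Q (reflv x v)
        - reflv x v j * ∑ a, x a * pdv a Q (reflv x v)) :=
      funext fun v => (HasPdvAt.mul_comp_reflv_left hQ hx v (hα j)).2
    have h2 := ((HasPdvAt.comp_reflv_right hQ.differentiable j x v).const_mul (α' j)).add
      ((((HasPdvAt.inner_reflv_right j hx v).mul (.comp_reflv_right (hdiff j) j x v)).sub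
        ((HasPdvAt.reflv_coord_right j j x v).mul (.sum (s := Finset.univ) fun a _ =>
          (HasPdvAt.comp_reflv_right (hdiff a) j x v).const_mul (x a)))).const_mul
            (α x * (2 * ρ)))
    have h3 : pd2 j (pd1 j fun x v => α x * Q (reflv x v)) x v = _ :=
      (congrArg (fun g => pdv j g v) h1).trans h2.2
    rw [h3]
    have h4 : ∑ a, x a * (pdv j (pdv a Q) w - 2 * ρ * x j * ∑ b, x b * pdv b (pdv a Q) w)
        = H j - 2 * ρ * x j * ∑ a, x a * H a := by
      rw [Finset.mul_sum, ← Finset.sum_sub_distrib]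
      refine Finset.sum_congr rfl fun a _ => ?_
      rw [hQ.pdv_pdv_comm]; ring
    rw [h4]
    simp only [if_true]
    ring
  rw [Finset.sum_congr rfl fun j _ => key j]
  set XX := ∑ a, x a * H a with hXX
  have hS : ∑ j, x j * pdv j Q w = X := rfl
  have hL : ∑ j, pdv j (pdv j Q) w = 0 := hQ.harmonic w
  have hE : ∑ j, w j * H j = (κ - 1) * X := hQ.sum_sum_euler x w
  have hσ' : ∑ j, x j * w j = σ := sum_mul_coord x w
  have hr : ∑ j, x j * x j = ‖x‖ ^ 2 := sum_coord_sq x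
  have hm : ∑ _j : Fin m, (1 : ℝ) = m := by simp
  calc _ = ∑ j, α' j * pdv j Q w - 2 * ρ * X * ∑ j, x j * α' j
        + α x * (2 * ρ) * (-∑ j, x j * pdv j Q w + σ * ∑ j, pdv j (pdv j Q) w
          - 2 * ρ * σ * ∑ j, x j * H j - X * ∑ _j : Fin m, (1 : ℝ)
          + 2 * ρ * X * ∑ j, x j * x j - ∑ j, w j * H j
          + 2 * ρ * XX * ∑ j, x j * w j) := by
        simp only [Finset.mul_sum, ← Finset.sum_add_distrib, ← Finset.sum_sub_distrib,
          ← Finset.sum_neg_distrib]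
        exact Finset.sum_congr rfl fun j _ => by ring
    _ = ∑ j, α' j * pdv j Q w - 2 * ρ * (m + κ - 2 + e) * α x * ∑ j, x j * pdv j Q w := by
        rw [he, hS, hL, hE, hσ', hr, hm, ← hXX, show ‖x‖ ^ 2 = ρ⁻¹ by simp [hρ]]
        have : ρ ≠ 0 := inv_ne_zero hn
        field_simp
        ring
    _ = _ := by
        rw [Finset.mul_sum, ← Finset.sum_sub_distrib]
        exact Finset.sum_congr rfl fun j _ => by ring

/-- The operator `⟨v, D_x⟩` applied to `α(x) Q(R_x v)`. -/
theorem sum_coord_mul_pd1_mul_comp_reflv (hQ : EulerHarmonic κ Q) {x : Evec m} (hx : x ≠ 0)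
    (v : Evec m) {α' : Fin m → ℝ} (hα : ∀ j, HasPdvAt j α x (α' j))
    (he : ∑ j, x j * α' j = e * α x) :
    ∑ i, v i * pd1 i (fun x v => α x * Q (reflv x v)) x v
      = (∑ i, reflv x v i * α' i - 2 * (‖x‖ ^ 2)⁻¹ * ⟪x, reflv x v⟫ * e * α x) * Q (reflv x v)
        + 2 * (‖x‖ ^ 2)⁻¹ * α x * (⟪x, reflv x v⟫ * κ * Q (reflv x v)
          - ‖v‖ ^ 2 * ∑ a, x a * pdv a Q (reflv x v)) := by
  have hv : ∀ i, v i = reflv x v i - 2 * (‖x‖ ^ 2)⁻¹ * ⟪x, reflv x v⟫ * x i := by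
    intro i
    rw [reflv_apply, inner_reflv_self hx]; ring
  have hpd : ∀ i, pd1 i (fun x v => α x * Q (reflv x v)) x v = _ := fun i =>
    (HasPdvAt.mul_comp_reflv_left hQ hx v (hα i)).2
  rw [Finset.sum_congr rfl fun i _ => show _ = _ by rw [hpd i, hv i], ← norm_reflv x v]
  set w := reflv x v with hw
  set ρ := (‖x‖ ^ 2)⁻¹ with hρ
  set σ := ⟪x, w⟫ with hσ
  set X := ∑ a, x a * pdv a Q w with hX
  have hS : ∑ j, x j * pdv j Q w = X := rfl
  have hE : ∑ j, w j * pdv j Q w = κ * Q w := hQ.euler w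
  have hσ' : ∑ j, x j * w j = σ := sum_mul_coord x w
  have hr : ∑ j, w j * w j = ‖w‖ ^ 2 := sum_coord_sq w
  calc _ = Q w * (∑ i, w i * α' i - 2 * ρ * σ * ∑ i, x i * α' i)
        + α x * (2 * ρ) * (σ * ∑ j, w j * pdv j Q w - X * ∑ j, w j * w j
          - 2 * ρ * σ * (σ * ∑ j, x j * pdv j Q w - X * ∑ j, x j * w j)) := by
        simp only [Finset.mul_sum, ← Finset.sum_add_distrib, ← Finset.sum_sub_distrib]
        exact Finset.sum_congr rfl fun j _ => by ring
    _ = _ := by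
        rw [he, hS, hE, hσ', hr]
        ring

/-- The Laplacian in `x` of `α(x) Q(R_x v)` for a harmonic function `α`. -/
theorem sum_pd1_pd1_mul_comp_reflv (hQ : EulerHarmonic κ Q) {x : Evec m} (hx : x ≠ 0)
    (v : Evec m) {α' : Fin m → Evec m → ℝ} {α'' : Fin m → ℝ}
    (hα : ∀ j, ∀ z ≠ 0, HasPdvAt j α z (α' j z)) (hα' : ∀ j, HasPdvAt j (α' j) x (α'' j))
    (hΔ : ∑ j, α'' j = 0) :
    ∑ j, pd1 j (pd1 j fun x v => α x * Q (reflv x v)) x v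
      = 4 * (‖x‖ ^ 2)⁻¹ * (⟪x, reflv x v⟫ * ∑ j, α' j x * pdv j Q (reflv x v)
          - (∑ j, α' j x * reflv x v j) * ∑ a, x a * pdv a Q (reflv x v))
        + 4 * (‖x‖ ^ 2)⁻¹ * α x * (-(κ * Q (reflv x v))
          - (‖x‖ ^ 2)⁻¹ * (m + 2 * κ - 4) * ⟪x, reflv x v⟫ * (∑ a, x a * pdv a Q (reflv x v))
          + (‖x‖ ^ 2)⁻¹ * ‖v‖ ^ 2 * ∑ a, x a * ∑ b, x b * pdv b (pdv a Q) (reflv x v)) := by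
  have hdiff : ∀ b, Differentiable ℝ (pdv b Q) := fun b => (hQ.partial_deriv b).differentiable
  have hv : ∀ i, v i = reflv x v i - 2 * (‖x‖ ^ 2)⁻¹ * ⟪x, reflv x v⟫ * x i := by
    intro i
    rw [reflv_apply, inner_reflv_self hx]; ring
  have hn : ‖x‖ ^ 2 ≠ 0 := by simpa using hx
  rw [← norm_reflv x v]
  set w := reflv x v with hw
  set ρ := (‖x‖ ^ 2)⁻¹ with hρ
  set σ := ⟪x, w⟫ with hσ
  set X := ∑ a, x a * pdv a Q w with hX
  set H : Fin m → ℝ := fun j => ∑ a, x a * pdv a (pdv j Q) w with hH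
  set XX := ∑ a, x a * H a with hXX
  have key : ∀ j, pd1 j (pd1 j fun x v => α x * Q (reflv x v)) x v
      = α'' j * Q w + α' j x * (2 * ρ) * (σ * pdv j Q w - w j * X)
        + (α' j x * (2 * ρ) - 4 * α x * x j * ρ ^ 2) * (σ * pdv j Q w - w j * X)
        + α x * (2 * ρ) * (-(w j - 2 * ρ * σ * x j) * pdv j Q w
          + σ * (2 * ρ * (σ * pdv j (pdv j Q) w - w j * H j))
          - (2 * ρ * (σ - w j * x j) * X
            + w j * (pdv j Q w + 2 * ρ * (σ * H j - w j * XX)))) := by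
    intro j
    have h1 : (fun x => pd1 j (fun x v => α x * Q (reflv x v)) x v) =ᶠ[𝓝 x] fun x =>
        α' j x * Q (reflv x v) + α x * (2 * (‖x‖ ^ 2)⁻¹) * (⟪x, reflv x v⟫ * pdv j Q (reflv x v)
        - reflv x v j * ∑ a, x a * pdv a Q (reflv x v)) := by
      filter_upwards [isOpen_ne.mem_nhds hx] with z hz
      exact (HasPdvAt.mul_comp_reflv_left hQ hz v (hα j z hz)).2
    have h2 := ((hα' j).mul (.comp_reflv_left hQ.differentiable j hx v)).add
      (((hα j x hx).mul ((HasPdvAt.inv_norm_pow hx 2).const_mul 2)).mul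
        (((HasPdvAt.inner_reflv_left j hx v).mul (.comp_reflv_left (hdiff j) j hx v)).sub
        ((HasPdvAt.reflv_coord_left j j hx v).mul (.sum (s := Finset.univ) fun a _ =>
          (HasPdvAt.coord a).mul (HasPdvAt.comp_reflv_left (hdiff a) j hx v)))))
    have h3 : pd1 j (pd1 j fun x v => α x * Q (reflv x v)) x v = _ :=
      (h2.congr_of_eventuallyEq h1).2
    rw [h3]
    have h4 : ∑ a, ((if j = a then 1 else 0) * pdv a Q w
          + x a * (2 * ρ * (σ * pdv j (pdv a Q) w - w j * ∑ b, x b * pdv b (pdv a Q) w)))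
        = pdv j Q w + 2 * ρ * (σ * H j - w j * XX) := by
      rw [Finset.sum_add_distrib]
      congr 1
      · simp
      · simp only [hXX, hH, mul_sub, Finset.mul_sum, ← Finset.sum_sub_distrib]
        refine Finset.sum_congr rfl fun a _ => ?_
        rw [hQ.pdv_pdv_comm j a]; congr 1
        · ring
        · exact Finset.sum_congr rfl fun b _ => by ring
    rw [h4, hv j]
    have h5 : (‖x‖ ^ (2 + 2))⁻¹ = ρ ^ 2 := by rw [hρ, inv_pow, ← pow_mul]
    rw [h5]
    simp only [if_true]
    push_cast
    ring
  rw [Finset.sum_congr rfl fun j _ => key j]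
  have hS : ∑ j, x j * pdv j Q w = X := rfl
  have hL : ∑ j, pdv j (pdv j Q) w = 0 := hQ.harmonic w
  have hE1 : ∑ j, w j * pdv j Q w = κ * Q w := hQ.euler w
  have hE : ∑ j, w j * H j = (κ - 1) * X := hQ.sum_sum_euler x w
  have hσ' : ∑ j, x j * w j = σ := sum_mul_coord x w
  have hr : ∑ j, w j * w j = ‖w‖ ^ 2 := sum_coord_sq w
  have hm : ∑ _j : Fin m, (1 : ℝ) = m := by simp
  calc _ = Q w * ∑ j, α'' j + 4 * ρ * (σ * ∑ j, α' j x * pdv j Q w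
          - (∑ j, α' j x * w j) * X)
        - 4 * α x * ρ ^ 2 * (σ * ∑ j, x j * pdv j Q w - X * ∑ j, x j * w j)
        + α x * (2 * ρ) * (-∑ j, w j * pdv j Q w + 2 * ρ * σ * ∑ j, x j * pdv j Q w
          + 2 * ρ * σ * (σ * ∑ j, pdv j (pdv j Q) w - ∑ j, w j * H j)
          - 2 * ρ * X * (σ * ∑ _j : Fin m, (1 : ℝ) - ∑ j, x j * w j)
          - ∑ j, w j * pdv j Q w - 2 * ρ * (σ * ∑ j, w j * H j - XX * ∑ j, w j * w j)) := by
        simp only [Finset.mul_sum, Finset.sum_mul, ← Finset.sum_add_distrib,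
          ← Finset.sum_sub_distrib, ← Finset.sum_neg_distrib]
        exact Finset.sum_congr rfl fun j _ => by ring
    _ = _ := by
        rw [hΔ, hS, hL, hE, hE1, hσ', hr, hm]
        ring

end Kernel

section JointSmooth

variable {m : ℕ} {U : Set (Evec m)}

/-- Joint smoothness of `f(x, v)` for `x ∈ U` and arbitrary `v`. -/
def JointSmooth (U : Set (Evec m)) (f : Evec m → Evec m → ℝ) : Prop :=
  ContDiffOn ℝ (⊤ : ℕ∞) (fun q : Evec m × Evec m => f q.1 q.2) (U ×ˢ Set.univ)

variable {f g : Evec m → Evec m → ℝ}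

theorem JointSmooth.differentiableAt (hU : IsOpen U) (hf : JointSmooth U f) {x : Evec m}
    (hx : x ∈ U) (v : Evec m) :
    DifferentiableAt ℝ (fun q : Evec m × Evec m => f q.1 q.2) (x, v) :=
  (ContDiffOn.contDiffAt hf ((hU.prod isOpen_univ).mem_nhds ⟨hx, trivial⟩)).differentiableAt
    (by simp)

theorem JointSmooth.hasPdvAt_left (hU : IsOpen U) (hf : JointSmooth U f) (i : Fin m) {x : Evec m}
    (hx : x ∈ U) (v : Evec m) : HasPdvAt i (fun x => f x v) x (pd1 i f x v) :=
  .of_differentiableAt ((hf.differentiableAt hU hx v).comp (f := fun x => (x, v)) x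
    (differentiableAt_id.prodMk (differentiableAt_const v)))

theorem JointSmooth.hasPdvAt_right (hU : IsOpen U) (hf : JointSmooth U f) (i : Fin m)
    {x : Evec m} (hx : x ∈ U) (v : Evec m) : HasPdvAt i (fun v => f x v) v (pd2 i f x v) :=
  .of_differentiableAt ((hf.differentiableAt hU hx v).comp (f := fun v => (x, v)) v
    ((differentiableAt_const x).prodMk differentiableAt_id))

theorem JointSmooth.pd1 (hU : IsOpen U) (hf : JointSmooth U f) (i : Fin m) :
    JointSmooth U (pd1 i f) := by
  have h : ContDiffOn ℝ (⊤ : ℕ∞) (fun q : Evec m × Evec m =>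
      fderiv ℝ (fun q : Evec m × Evec m => f q.1 q.2) q (EuclideanSpace.single i 1, 0))
      (U ×ˢ Set.univ) :=
    (ContDiffOn.fderiv_of_isOpen hf (hU.prod isOpen_univ) (m := (⊤ : ℕ∞)) (by simp)).clm_apply
      contDiffOn_const
  refine h.congr fun q hq => ?_
  have h1 := (hf.differentiableAt hU hq.1 q.2).hasFDerivAt.comp (f := fun x => (x, q.2)) q.1
    ((hasFDerivAt_id q.1).prodMk (hasFDerivAt_const q.2 q.1))
  exact (HasPdvAt.of_hasFDerivAt h1 (by simp)).2

theorem JointSmooth.pd2 (hU : IsOpen U) (hf : JointSmooth U f) (i : Fin m) :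
    JointSmooth U (pd2 i f) := by
  have h : ContDiffOn ℝ (⊤ : ℕ∞) (fun q : Evec m × Evec m =>
      fderiv ℝ (fun q : Evec m × Evec m => f q.1 q.2) q (0, EuclideanSpace.single i 1))
      (U ×ˢ Set.univ) :=
    (ContDiffOn.fderiv_of_isOpen hf (hU.prod isOpen_univ) (m := (⊤ : ℕ∞)) (by simp)).clm_apply
      contDiffOn_const
  refine h.congr fun q hq => ?_
  have h1 := (hf.differentiableAt hU hq.1 q.2).hasFDerivAt.comp (f := fun v => (q.1, v)) q.2
    ((hasFDerivAt_const q.1 q.2).prodMk (hasFDerivAt_id q.2))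
  exact (HasPdvAt.of_hasFDerivAt h1 (by simp)).2

theorem pd1_congr (hU : IsOpen U) (h : ∀ x ∈ U, ∀ v, g x v = f x v) (i : Fin m) :
    ∀ x ∈ U, ∀ v, pd1 i g x v = pd1 i f x v := by
  intro x hx v
  have : (fun x => g x v) =ᶠ[𝓝 x] fun x => f x v := by
    filter_upwards [hU.mem_nhds hx] with z hz using h z hz v
  rw [pd1, this.fderiv_eq, pd1]

theorem pd2_congr (h : ∀ x ∈ U, ∀ v, g x v = f x v) (i : Fin m) :
    ∀ x ∈ U, ∀ v, pd2 i g x v = pd2 i f x v := by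
  intro x hx v
  rw [pd2, show (fun v => g x v) = fun v => f x v from funext (h x hx), pd2]

theorem pd1_sum (hU : IsOpen U) {ι : Type*} {s : Finset ι} {f : ι → Evec m → Evec m → ℝ}
    (hf : ∀ a ∈ s, JointSmooth U (f a)) (i : Fin m) :
    ∀ x ∈ U, ∀ v, pd1 i (fun x v => ∑ a ∈ s, f a x v) x v = ∑ a ∈ s, pd1 i (f a) x v :=
  fun _ hx v => (HasPdvAt.sum fun a ha => (hf a ha).hasPdvAt_left hU i hx v).2

theorem pd2_sum (hU : IsOpen U) {ι : Type*} {s : Finset ι} {f : ι → Evec m → Evec m → ℝ}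
    (hf : ∀ a ∈ s, JointSmooth U (f a)) (i : Fin m) :
    ∀ x ∈ U, ∀ v, pd2 i (fun x v => ∑ a ∈ s, f a x v) x v = ∑ a ∈ s, pd2 i (f a) x v :=
  fun _ hx v => (HasPdvAt.sum fun a ha => (hf a ha).hasPdvAt_right hU i hx v).2

theorem pd2_pd1_sum (hU : IsOpen U) {ι : Type*} {s : Finset ι} {f : ι → Evec m → Evec m → ℝ}
    (hf : ∀ a ∈ s, JointSmooth U (f a)) (i j : Fin m) :
    ∀ x ∈ U, ∀ v,
      pd2 j (pd1 i (fun x v => ∑ a ∈ s, f a x v)) x v = ∑ a ∈ s, pd2 j (pd1 i (f a)) x v :=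
  fun x hx v => (pd2_congr (pd1_sum hU hf i) j x hx v).trans
    (pd2_sum hU (fun a ha => (hf a ha).pd1 hU i) j x hx v)

/-- The bosonic Laplacian in terms of the mixed divergence `⟨D_u, D_x⟩ f`. -/
theorem Dk_eq_of_div (hU : IsOpen U) (hf : JointSmooth U f) (k : ℕ) {B : Evec m → Evec m → ℝ}
    (hB : ∀ x ∈ U, ∀ v, ∑ j, pd2 j (pd1 j f) x v = B x v) {x : Evec m} (hx : x ∈ U)
    (v : Evec m) :
    Dk m k f x v = (∑ i, pd1 i (pd1 i f) x v)
      - (4 / ((m : ℝ) + 2 * k - 2)) * ∑ i, v i * pd1 i B x v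
      + (4 * ‖v‖ ^ 2 / (((m : ℝ) + 2 * k - 2) * ((m : ℝ) + 2 * k - 4))) *
        ∑ i, pd2 i (pd1 i B) x v := by
  have hG : ∀ j ∈ (Finset.univ : Finset (Fin m)), JointSmooth U (_root_.pd2 j (_root_.pd1 j f)) :=
    fun j _ => (hf.pd1 hU j).pd2 hU j
  have h1 : ∀ i, ∑ j, v i * _root_.pd1 i (_root_.pd2 j (_root_.pd1 j f)) x v
      = v i * _root_.pd1 i B x v := by
    intro i
    rw [← Finset.mul_sum, ← pd1_sum hU hG i x hx v, pd1_congr hU hB i x hx v]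
  have h2 : ∀ i, ∑ j, _root_.pd2 i (_root_.pd1 i (_root_.pd2 j (_root_.pd1 j f))) x v
      = _root_.pd2 i (_root_.pd1 i B) x v := by
    intro i
    rw [← pd2_pd1_sum hU hG i i x hx v, pd2_congr (pd1_congr hU hB i) i x hx v]
  simp only [Dk, h1, h2]

theorem contDiffOn_reflv :
    ContDiffOn ℝ (⊤ : ℕ∞) (fun q : Evec m × Evec m => reflv q.1 q.2) ({0}ᶜ ×ˢ Set.univ) := by
  unfold reflv
  refine contDiffOn_snd.sub (ContDiffOn.fun_smul (ContDiffOn.div ?_ ?_ ?_) contDiffOn_fst)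
  · exact contDiffOn_const.mul (contDiffOn_fst.inner ℝ contDiffOn_snd)
  · exact (contDiff_fst.norm_sq ℝ).contDiffOn
  · rintro q ⟨hq, -⟩
    simpa using hq

theorem JointSmooth.mul_comp_reflv {α Q : Evec m → ℝ} (hα : ContDiffOn ℝ (⊤ : ℕ∞) α {0}ᶜ)
    (hQ : ContDiff ℝ (⊤ : ℕ∞) Q) :
    JointSmooth {0}ᶜ (fun x v => α x * Q (reflv x v)) :=
  (hα.comp contDiffOn_fst fun _ hq => hq.1).mul (hQ.comp_contDiffOn contDiffOn_reflv)

theorem contDiffOn_inv_norm_pow (N : ℕ) :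
    ContDiffOn ℝ (⊤ : ℕ∞) (fun x : Evec m => (‖x‖ ^ N)⁻¹) {0}ᶜ := by
  intro x hx
  have hx' : x ≠ 0 := hx
  exact (((contDiffAt_norm ℝ hx').pow N).inv (by simp [hx'])).contDiffWithinAt

theorem contDiff_coord (l : Fin m) : ContDiff ℝ (⊤ : ℕ∞) (fun x : Evec m => x l) :=
  (EuclideanSpace.proj (𝕜 := ℝ) l).contDiff

end JointSmooth

section PoissonKernel

variable {m : ℕ}

theorem norm_sq_mul_inv_pow {x : Evec m} (hx : x ≠ 0) (N : ℕ) :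
    ‖x‖ ^ 2 * (‖x‖ ^ (N + 2))⁻¹ = (‖x‖ ^ N)⁻¹ := by
  have hn : ‖x‖ ≠ 0 := norm_ne_zero_iff.2 hx
  field_simp
  ring

/-- The kernel `x_l |x|^{-m} Q(R_x v)` is annihilated by the bosonic Laplacian. -/
theorem Dk_poissonKernel (l : Fin m) (k : ℕ) (hm : 3 ≤ m) (hk : 1 ≤ k) {Q : Evec m → ℝ}
    (hQ : EulerHarmonic (k : ℝ) Q) {x : Evec m} (hx : x ≠ 0) (v : Evec m) :
    Dk m k (fun x v => x l * (‖x‖ ^ m)⁻¹ * Q (reflv x v)) x v = 0 := by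
  have hU : IsOpen ({0}ᶜ : Set (Evec m)) := isOpen_compl_singleton
  have hm' : (3 : ℝ) ≤ m := by exact_mod_cast hm
  have hk' : (1 : ℝ) ≤ k := by exact_mod_cast hk
  set n : ℝ := (m : ℝ) + 2 * k - 2 with hn
  have hn0 : n ≠ 0 := by rw [hn]; linarith
  have hn2 : n - 2 ≠ 0 := by rw [hn]; linarith
  let δ : Fin m → ℝ := fun a => if a = l then 1 else 0
  let α : Evec m → ℝ := fun x => x l * (‖x‖ ^ m)⁻¹
  let α' : Fin m → Evec m → ℝ := fun j x =>
    δ j * (‖x‖ ^ m)⁻¹ - m * (x l * x j * (‖x‖ ^ (m + 2))⁻¹)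
  let β : Fin m → Evec m → ℝ := fun a x =>
    δ a * (‖x‖ ^ m)⁻¹ - n * (x l * x a * (‖x‖ ^ (m + 2))⁻¹)
  have hδ : ∀ (i : Fin m) (z : Evec m), HasPdvAt i (fun x => x l) z (δ i) := fun i z => .coord l
  have hα : ∀ j, ∀ z ≠ 0, HasPdvAt j α z (α' j z) := fun j z hz =>
    ((hδ j z).mul (.inv_norm_pow hz m)).congr_val (by simp only [α']; ring)
  -- derivatives of a combination of the two radial terms
  have hgen : ∀ (c : ℝ) (a i : Fin m), ∀ z ≠ 0,
      HasPdvAt i (fun x : Evec m => δ a * (‖x‖ ^ m)⁻¹ - c * (x l * x a * (‖x‖ ^ (m + 2))⁻¹)) z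
        (-(δ a * m * z i * (‖z‖ ^ (m + 2))⁻¹) - c * ((δ i * z a + z l * if i = a then 1 else 0)
          * (‖z‖ ^ (m + 2))⁻¹ - (m + 2) * z l * z a * z i * (‖z‖ ^ (m + 2 + 2))⁻¹)) := by
    intro c a i z hz
    refine (((HasPdvAt.inv_norm_pow hz m).const_mul (δ a)).sub
      ((((hδ i z).mul (HasPdvAt.coord a)).mul (.inv_norm_pow hz (m + 2))).const_mul c)).congr_val ?_
    push_cast
    ring
  have hδs : ∀ g : Fin m → ℝ, ∑ j, δ j * g j = g l := by intro g; simp [δ]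
  have hr : ∀ z : Evec m, ∑ j, z j * z j = ‖z‖ ^ 2 := sum_coord_sq
  have hr2 : ∀ z : Evec m, z ≠ 0 → ‖z‖ ^ 2 * (‖z‖ ^ (m + 2))⁻¹ = (‖z‖ ^ m)⁻¹ :=
    fun z hz => norm_sq_mul_inv_pow hz m
  have hr4 : ∀ z : Evec m, z ≠ 0 → ‖z‖ ^ 2 * (‖z‖ ^ (m + 2 + 2))⁻¹ = (‖z‖ ^ (m + 2))⁻¹ :=
    fun z hz => norm_sq_mul_inv_pow hz (m + 2)
  -- Euler identities of the coefficients
  have heα : ∀ z : Evec m, z ≠ 0 → ∑ j, z j * α' j z = (1 - m) * α z := by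
    intro z hz
    calc _ = (‖z‖ ^ m)⁻¹ * ∑ j, δ j * z j
          - m * z l * (‖z‖ ^ (m + 2))⁻¹ * ∑ j, z j * z j := by
          simp only [Finset.mul_sum, ← Finset.sum_sub_distrib, α']
          exact Finset.sum_congr rfl fun j _ => by ring
      _ = _ := by
          simp only [α]
          rw [hδs, hr, ← hr2 z hz]; ring
  have heβ : ∀ a, ∑ i, x i * (-(δ a * m * x i * (‖x‖ ^ (m + 2))⁻¹)
      - n * ((δ i * x a + x l * if i = a then 1 else 0)
          * (‖x‖ ^ (m + 2))⁻¹ - (m + 2) * x l * x a * x i * (‖x‖ ^ (m + 2 + 2))⁻¹))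
      = (-m) * β a x := by
    intro a
    calc _ = -(δ a * m * (‖x‖ ^ (m + 2))⁻¹) * ∑ i, x i * x i
          - n * (x a * (‖x‖ ^ (m + 2))⁻¹ * ∑ i, δ i * x i
            + x l * (‖x‖ ^ (m + 2))⁻¹ * ∑ i, (if i = a then x i else 0)
            - (m + 2) * x l * x a * (‖x‖ ^ (m + 2 + 2))⁻¹ * ∑ i, x i * x i) := by
          simp only [Finset.mul_sum, ← Finset.sum_sub_distrib, ← Finset.sum_add_distrib]
          exact Finset.sum_congr rfl fun i _ => by split_ifs <;> ring
      _ = _ := by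
          simp only [β]
          rw [hδs, hr, ← hr2 x hx, ← hr4 x hx]
          simp only [Finset.sum_ite_eq', Finset.mem_univ, if_true]
          ring
  have hΔα : ∑ j, (-(δ j * m * x j * (‖x‖ ^ (m + 2))⁻¹)
      - m * ((δ j * x j + x l * if j = j then 1 else 0)
          * (‖x‖ ^ (m + 2))⁻¹ - (m + 2) * x l * x j * x j * (‖x‖ ^ (m + 2 + 2))⁻¹)) = 0 := by
    have hms : ∑ _j : Fin m, (1 : ℝ) = m := by simp
    calc _ = -(2 * m * (‖x‖ ^ (m + 2))⁻¹) * ∑ j, δ j * x j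
          - m * x l * (‖x‖ ^ (m + 2))⁻¹ * ∑ _j : Fin m, (1 : ℝ)
          + m * (m + 2) * x l * (‖x‖ ^ (m + 2 + 2))⁻¹ * ∑ j, x j * x j := by
          simp only [Finset.mul_sum, ← Finset.sum_sub_distrib, ← Finset.sum_add_distrib, if_true]
          exact Finset.sum_congr rfl fun j _ => by ring
      _ = 0 := by
          rw [hδs, hr, hms, ← hr4 x hx]; ring
  -- the mixed divergence
  let B : Evec m → Evec m → ℝ := fun x v => ∑ a, β a x * pdv a Q (reflv x v)
  have hdiv : ∀ z ∈ ({0}ᶜ : Set (Evec m)), ∀ v,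
      ∑ j, pd2 j (pd1 j fun x v => x l * (‖x‖ ^ m)⁻¹ * Q (reflv x v)) z v = B z v := by
    intro z hz v
    have hz' : z ≠ 0 := hz
    rw [sum_pd2_pd1_mul_comp_reflv hQ hz' v (fun j => hα j z hz') (heα z hz')]
    refine Finset.sum_congr rfl fun a _ => ?_
    congr 1
    have h2 : (‖z‖ ^ 2)⁻¹ * (‖z‖ ^ m)⁻¹ = (‖z‖ ^ (m + 2))⁻¹ := by
      rw [← mul_inv, ← pow_add, add_comm]
    simp only [α', β]
    linear_combination (-2) * (m + k - 2 + (1 - m)) * z a * z l * h2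
  have hαs : ContDiffOn ℝ (⊤ : ℕ∞) α {0}ᶜ :=
    (contDiff_coord l).contDiffOn.mul (contDiffOn_inv_norm_pow m)
  have hβs : ∀ a, ContDiffOn ℝ (⊤ : ℕ∞) (β a) {0}ᶜ := fun a =>
    (contDiffOn_const.mul (contDiffOn_inv_norm_pow m)).sub (contDiffOn_const.mul
      (((contDiff_coord l).mul (contDiff_coord a)).contDiffOn.mul
        (contDiffOn_inv_norm_pow (m + 2))))
  have hMs : ∀ a ∈ (Finset.univ : Finset (Fin m)),
      JointSmooth {0}ᶜ (fun x v => β a x * pdv a Q (reflv x v)) :=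
    fun a _ => .mul_comp_reflv (hβs a) (contDiff_pdv hQ.contDiff a)
  rw [Dk_eq_of_div hU (JointSmooth.mul_comp_reflv hαs hQ.contDiff) k hdiv hx v]
  have hgrad : ∑ i, v i * pd1 i B x v
      = ∑ a, ∑ i, v i * pd1 i (fun x v => β a x * pdv a Q (reflv x v)) x v := by
    rw [Finset.sum_comm]
    refine Finset.sum_congr rfl fun i _ => ?_
    rw [pd1_sum hU hMs i x hx v, Finset.mul_sum]
  have hdivdiv : ∑ i, pd2 i (pd1 i B) x v
      = ∑ a, ∑ i, pd2 i (pd1 i (fun x v => β a x * pdv a Q (reflv x v))) x v := by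
    rw [Finset.sum_comm]
    exact Finset.sum_congr rfl fun i _ => pd2_pd1_sum hU hMs i i x hx v
  rw [hgrad, hdivdiv, sum_pd1_pd1_mul_comp_reflv hQ hx v hα (fun j => hgen m j j x hx) hΔα,
    Finset.sum_congr rfl fun a _ => sum_coord_mul_pd1_mul_comp_reflv (hQ.partial_deriv a) hx v
      (fun i => hgen n a i x hx) (heβ a),
    Finset.sum_congr rfl fun a _ => sum_pd2_pd1_mul_comp_reflv (hQ.partial_deriv a) hx v
      (fun i => hgen n a i x hx) (heβ a)]
  set w := reflv x v with hw
  set ρ := (‖x‖ ^ 2)⁻¹ with hρ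
  set σ := ⟪x, w⟫ with hσ
  set X := ∑ a, x a * pdv a Q w with hX
  set H : Fin m → ℝ := fun j => ∑ a, x a * pdv a (pdv j Q) w with hH
  set XX := ∑ a, x a * H a with hXX
  set s := (‖x‖ ^ m)⁻¹ with hs
  have hs2 : (‖x‖ ^ (m + 2))⁻¹ = ρ * s := by rw [hρ, hs, ← mul_inv, ← pow_add, add_comm]
  have hs4 : (‖x‖ ^ (m + 2 + 2))⁻¹ = ρ ^ 2 * s := by
    rw [hρ, hs, inv_pow, ← mul_inv, ← pow_mul, ← pow_add]; congr 2; ring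
  have hE : ∑ j, w j * pdv j Q w = k * Q w := hQ.euler w
  have hL : ∑ j, pdv j (pdv j Q) w = 0 := hQ.harmonic w
  have hσ' : ∑ j, w j * x j = σ :=
    (Finset.sum_congr rfl fun j _ => mul_comm _ _).trans (sum_mul_coord x w)
  have hHl : ∑ a, x a * pdv l (pdv a Q) w = H l :=
    Finset.sum_congr rfl fun a _ => by rw [hQ.pdv_pdv_comm]
  have hα1 : ∑ j, α' j x * pdv j Q w = s * pdv l Q w - m * x l * (ρ * s) * X := by
    rw [← hδs fun j => pdv j Q w, hX]
    simp only [Finset.mul_sum, ← Finset.sum_sub_distrib, α', hs2]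
    exact Finset.sum_congr rfl fun j _ => by ring
  have hα2 : ∑ j, α' j x * w j = s * w l - m * x l * (ρ * s) * σ := by
    rw [← hδs fun j => w j, ← hσ']
    simp only [Finset.mul_sum, ← Finset.sum_sub_distrib, α', hs2]
    exact Finset.sum_congr rfl fun j _ => by ring
  have hβ1 : ∀ g : Fin m → ℝ,
      ∑ a, β a x * g a = s * g l - n * x l * (ρ * s) * ∑ a, x a * g a := by
    intro g
    rw [← hδs g]
    simp only [Finset.mul_sum, ← Finset.sum_sub_distrib, β, hs2]
    exact Finset.sum_congr rfl fun j _ => by ring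
  rw [hs2, hs4, hα1, hα2]
  have hinner : ∀ a, ∑ i, w i * (-(δ a * m * x i * (ρ * s))
      - n * ((δ i * x a + x l * if i = a then 1 else 0) * (ρ * s)
        - (m + 2) * x l * x a * x i * (ρ ^ 2 * s)))
      = -(δ a * m * σ * (ρ * s)) - n * ((w l * x a + x l * w a) * (ρ * s)
        - (m + 2) * x l * x a * σ * (ρ ^ 2 * s)) := by
    intro a
    calc _ = -(δ a * m * (ρ * s)) * ∑ i, w i * x i
          - n * (x a * (ρ * s) * ∑ i, δ i * w i + x l * (ρ * s) * ∑ i, (if i = a then w i else 0)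
            - (m + 2) * x l * x a * (ρ ^ 2 * s) * ∑ i, w i * x i) := by
          simp only [Finset.mul_sum, ← Finset.sum_sub_distrib, ← Finset.sum_add_distrib]
          exact Finset.sum_congr rfl fun i _ => by split_ifs <;> ring
      _ = _ := by
          rw [hδs, hσ']
          simp only [Finset.sum_ite_eq', Finset.mem_univ, if_true]
          ring
  have hG : ∑ a, ((∑ i, w i * (-(δ a * m * x i * (ρ * s))
      - n * ((δ i * x a + x l * if i = a then 1 else 0) * (ρ * s)
        - (m + 2) * x l * x a * x i * (ρ ^ 2 * s))) - 2 * ρ * σ * (-m) * β a x) * pdv a Q w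
      + 2 * ρ * β a x * (σ * (k - 1) * pdv a Q w - ‖v‖ ^ 2 * ∑ b, x b * pdv b (pdv a Q) w))
      = -(m * σ * (ρ * s) * pdv l Q w) - n * ((w l * X + x l * (k * Q w)) * (ρ * s)
        - (m + 2) * x l * σ * (ρ ^ 2 * s) * X)
        + 2 * ρ * σ * (m + k - 1) * (s * pdv l Q w - n * x l * (ρ * s) * X)
        - 2 * ρ * ‖v‖ ^ 2 * (s * H l - n * x l * (ρ * s) * XX) := by
    rw [hXX, ← hβ1 H, hX, ← hβ1 fun a => pdv a Q w, ← hE, ← hδs fun a => pdv a Q w]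
    simp only [hinner, Finset.mul_sum, ← Finset.sum_sub_distrib, ← Finset.sum_add_distrib,
      Finset.sum_mul, ← Finset.sum_neg_distrib]
    refine Finset.sum_congr rfl fun a _ => ?_
    simp only [← Finset.mul_sum, hH]
    ring
  have hDD : ∑ a, ∑ b, (-(δ a * m * x b * (ρ * s))
      - n * ((δ b * x a + x l * if b = a then 1 else 0) * (ρ * s)
        - (m + 2) * x l * x a * x b * (ρ ^ 2 * s))
      - 2 * ρ * (m + (k - 1) - 2 + -m) * x b * β a x) * pdv b (pdv a Q) w
      = -(m * (ρ * s) * H l) - n * (ρ * s * H l - (m + 2) * x l * (ρ ^ 2 * s) * XX)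
        - 2 * ρ * (k - 3) * (s * H l - n * x l * (ρ * s) * XX) := by
    have hb : ∀ a, ∑ b, (-(δ a * m * x b * (ρ * s))
      - n * ((δ b * x a + x l * if b = a then 1 else 0) * (ρ * s)
        - (m + 2) * x l * x a * x b * (ρ ^ 2 * s))
      - 2 * ρ * (m + (k - 1) - 2 + -m) * x b * β a x) * pdv b (pdv a Q) w
      = -(m * (ρ * s)) * (δ a * H a) - n * (ρ * s) * (x a * pdv l (pdv a Q) w)
        - n * (ρ * s) * x l * pdv a (pdv a Q) w + n * (m + 2) * x l * (ρ ^ 2 * s) * (x a * H a)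
        - 2 * ρ * (k - 3) * (β a x * H a) := by
      intro a
      calc _ = -(m * (ρ * s)) * (δ a * ∑ b, x b * pdv b (pdv a Q) w)
            - n * (ρ * s) * (x a * ∑ b, δ b * pdv b (pdv a Q) w)
            - n * (ρ * s) * x l * ∑ b, (if b = a then pdv b (pdv a Q) w else 0)
            + n * (m + 2) * x l * (ρ ^ 2 * s) * (x a * ∑ b, x b * pdv b (pdv a Q) w)
            - 2 * ρ * (k - 3) * (β a x * ∑ b, x b * pdv b (pdv a Q) w) := by
            simp only [Finset.mul_sum, ← Finset.sum_sub_distrib, ← Finset.sum_add_distrib]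
            exact Finset.sum_congr rfl fun i _ => by split_ifs <;> ring
        _ = _ := by
            rw [hδs fun b => pdv b (pdv a Q) w]
            simp only [Finset.sum_ite_eq', Finset.mem_univ, if_true, hH]
    simp only [hb, Finset.sum_sub_distrib, Finset.sum_add_distrib, ← Finset.mul_sum]
    rw [hδs H, hHl, hL, hβ1 H]
    ring
  have hβx : ∀ a, δ a * s - n * (x l * x a * (ρ * s)) = β a x := fun a => by
    simp only [β, hs2, ← hs]
  simp only [hβx]
  rw [hG, hDD]
  have hmn : (m : ℝ) = n + 2 - 2 * k := by rw [hn]; ring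
  have hn4 : (m : ℝ) + 2 * k - 4 = n - 2 := by rw [hn]; ring
  rw [hn4, ← hn]
  simp only [α]
  rw [← hs, hmn]
  field_simp
  ring

end PoissonKernel

section Tensor

variable {m : ℕ} {U : Set (Evec m)} {ι : Type*} {s : Finset ι}

theorem contDiffOn_pdv (hU : IsOpen U) {h : Evec m → ℝ} (hh : ContDiffOn ℝ (⊤ : ℕ∞) h U)
    (i : Fin m) : ContDiffOn ℝ (⊤ : ℕ∞) (pdv i h) U :=
  (hh.fderiv_of_isOpen hU (m := (⊤ : ℕ∞)) (by simp)).clm_apply contDiffOn_const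

theorem hasPdvAt_of_contDiffOn (hU : IsOpen U) {h : Evec m → ℝ}
    (hh : ContDiffOn ℝ (⊤ : ℕ∞) h U) (i : Fin m) {x : Evec m} (hx : x ∈ U) :
    HasPdvAt i h x (pdv i h x) :=
  .of_differentiableAt ((hh.contDiffAt (hU.mem_nhds hx)).differentiableAt (by simp))

theorem pd1_sum_mul (hU : IsOpen U) {h : ι → Evec m → ℝ} (p : ι → Evec m → ℝ)
    (hh : ∀ a ∈ s, ContDiffOn ℝ (⊤ : ℕ∞) (h a) U) (i : Fin m) :
    ∀ x ∈ U, ∀ v, pd1 i (fun x v => ∑ a ∈ s, h a x * p a v) x v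
      = ∑ a ∈ s, pdv i (h a) x * p a v := by
  intro x hx v
  have := HasPdvAt.sum fun a ha =>
    (hasPdvAt_of_contDiffOn hU (hh a ha) i hx).mul (HasPdvAt.const (i := i) (x := x) (p a v))
  exact this.2.trans (by simp)

theorem pd2_sum_mul (h : ι → Evec m → ℝ) {p : ι → Evec m → ℝ}
    (hp : ∀ a ∈ s, ContDiff ℝ (⊤ : ℕ∞) (p a)) (i : Fin m) (x v : Evec m) :
    pd2 i (fun x v => ∑ a ∈ s, h a x * p a v) x v = ∑ a ∈ s, h a x * pdv i (p a) v :=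
  (HasPdvAt.sum fun a ha => HasPdvAt.const_mul (h a x)
    (.of_differentiableAt ((hp a ha).differentiable (by simp) v))).2

theorem Dk_congr (hU : IsOpen U) (k : ℕ) {f g : Evec m → Evec m → ℝ}
    (h : ∀ x ∈ U, ∀ v, g x v = f x v) : ∀ x ∈ U, ∀ v, Dk m k g x v = Dk m k f x v := by
  intro x hx v
  have h2 : ∀ j, ∀ x ∈ U, ∀ v, pd2 j (pd1 j g) x v = pd2 j (pd1 j f) x v := fun j =>
    pd2_congr (pd1_congr hU h j) j
  simp only [Dk, pd1_congr hU (pd1_congr hU h _) _ x hx v, pd1_congr hU (h2 _) _ x hx v,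
    pd2_congr (pd1_congr hU (h2 _) _) _ x hx v]

/-- The symbol of the bosonic Laplacian: the coefficient of `∂_{x_i} ∂_{x_j}`, applied to `p`. -/
def bosonicSymbol (k : ℕ) (i j : Fin m) (p : Evec m → ℝ) (v : Evec m) : ℝ :=
  (if i = j then p v else 0) - 4 / ((m : ℝ) + 2 * k - 2) * (v i * pdv j p v)
    + 4 * ‖v‖ ^ 2 / (((m : ℝ) + 2 * k - 2) * ((m : ℝ) + 2 * k - 4)) * pdv i (pdv j p) v

theorem Dk_sum_mul (hU : IsOpen U) (k : ℕ) {h p : ι → Evec m → ℝ}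
    (hh : ∀ a ∈ s, ContDiffOn ℝ (⊤ : ℕ∞) (h a) U) (hp : ∀ a ∈ s, ContDiff ℝ (⊤ : ℕ∞) (p a)) :
    ∀ x ∈ U, ∀ v, Dk m k (fun x v => ∑ a ∈ s, h a x * p a v) x v
      = ∑ a ∈ s, ∑ i, ∑ j, pdv i (pdv j (h a)) x * bosonicSymbol k i j (p a) v := by
  intro x hx v
  have hh' : ∀ j, ∀ a ∈ s, ContDiffOn ℝ (⊤ : ℕ∞) (pdv j (h a)) U := fun j a ha =>
    contDiffOn_pdv hU (hh a ha) j
  have hp' : ∀ j, ∀ a ∈ s, ContDiff ℝ (⊤ : ℕ∞) (pdv j (p a)) := fun j a ha =>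
    contDiff_pdv (hp a ha) j
  have e1 : ∀ i, ∀ x ∈ U, ∀ v, pd1 i (pd1 i fun x v => ∑ a ∈ s, h a x * p a v) x v
      = ∑ a ∈ s, pdv i (pdv i (h a)) x * p a v := fun i x hx v =>
    (pd1_congr hU (pd1_sum_mul hU p hh i) i x hx v).trans (pd1_sum_mul hU p (hh' i) i x hx v)
  have e2 : ∀ j, ∀ x ∈ U, ∀ v, pd2 j (pd1 j fun x v => ∑ a ∈ s, h a x * p a v) x v
      = ∑ a ∈ s, pdv j (h a) x * pdv j (p a) v := fun j x hx v =>
    (pd2_congr (pd1_sum_mul hU p hh j) j x hx v).trans (pd2_sum_mul _ hp j x v)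
  have e3 : ∀ i j, ∀ x ∈ U, ∀ v, pd1 i (pd2 j (pd1 j fun x v => ∑ a ∈ s, h a x * p a v)) x v
      = ∑ a ∈ s, pdv i (pdv j (h a)) x * pdv j (p a) v := fun i j x hx v =>
    (pd1_congr hU (e2 j) i x hx v).trans (pd1_sum_mul hU _ (hh' j) i x hx v)
  have e4 : ∀ i j, pd2 i (pd1 i (pd2 j (pd1 j fun x v => ∑ a ∈ s, h a x * p a v))) x v
      = ∑ a ∈ s, pdv i (pdv j (h a)) x * pdv i (pdv j (p a)) v := fun i j =>
    (pd2_congr (e3 i j) i x hx v).trans (pd2_sum_mul _ (hp' j) i x v)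
  have hdiag : ∑ i, ∑ a ∈ s, pdv i (pdv i (h a)) x * p a v
      = ∑ i, ∑ j, ∑ a ∈ s, pdv i (pdv j (h a)) x * (if i = j then p a v else 0) := by
    refine Finset.sum_congr rfl fun i _ => ?_
    rw [Finset.sum_comm]
    simp
  rw [Dk]
  simp only [e1 _ x hx v, e3 _ _ x hx v, e4]
  rw [hdiag, Finset.sum_comm (s := s)]
  simp only [Finset.sum_comm (s := s), Finset.mul_sum, ← Finset.sum_sub_distrib,
    ← Finset.sum_add_distrib]
  refine Finset.sum_congr rfl fun i _ => Finset.sum_congr rfl fun j _ =>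
    Finset.sum_congr rfl fun a _ => ?_
  rw [bosonicSymbol]
  ring

end Tensor

section Interpolation

/-- A finite-dimensional space of functions determined by their values on `S` is spanned by
interpolating functions at finitely many points of `S`. -/
theorem exists_interpolation {X : Type*} (V : Submodule ℝ (X → ℝ)) [FiniteDimensional ℝ V]
    {S : Set X} (hS : ∀ q ∈ V, (∀ u ∈ S, q u = 0) → q = 0) :
    ∃ (N : ℕ) (u : Fin N → X) (p : Fin N → X → ℝ), (∀ i, u i ∈ S) ∧ (∀ i, p i ∈ V) ∧
      ∀ q ∈ V, ∀ v, q v = ∑ i, q (u i) * p i v := by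
  let ev : X → Module.Dual ℝ V := fun u => (LinearMap.proj u).comp V.subtype
  obtain ⟨φ, hφS, hφ, -⟩ := Submodule.exists_fun_fin_finrank_span_eq ℝ (ev '' S)
  choose u hu hev using hφS
  let E : V →ₗ[ℝ] (Fin _ → ℝ) := LinearMap.pi fun i => φ i
  have hE : LinearMap.ker E = ⊥ := by
    refine (LinearMap.ker_eq_bot').2 fun q hq => ?_
    have h0 : ∀ ψ ∈ Submodule.span ℝ (ev '' S), ψ q = 0 := by
      intro ψ hψ
      rw [← hφ] at hψ
      induction hψ using Submodule.span_induction with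
      | mem ψ h => obtain ⟨i, rfl⟩ := h; exact congrFun hq i
      | zero => rfl
      | add a b _ _ ha hb => rw [LinearMap.add_apply, ha, hb, add_zero]
      | smul c a _ ha => rw [LinearMap.smul_apply, ha, smul_zero]
    exact Subtype.ext (hS q q.2 fun w hw =>
      h0 (ev w) (Submodule.subset_span ⟨w, hw, rfl⟩))
  obtain ⟨L, hL⟩ := LinearMap.exists_leftInverse_of_injective E hE
  refine ⟨_, u, fun i => (L (Pi.single i 1) : V), hu, fun i => (L _).2, fun q hq v => ?_⟩
  have h1 : (⟨q, hq⟩ : V) = ∑ i, q (u i) • L (Pi.single i 1) := by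
    conv_lhs => rw [← LinearMap.id_apply (R := ℝ) (⟨q, hq⟩ : V), ← hL, LinearMap.comp_apply,
      LinearMap.pi_apply_eq_sum_univ L]
    refine Finset.sum_congr rfl fun i _ => ?_
    have : E ⟨q, hq⟩ i = q (u i) := by
      change φ i _ = _
      rw [← hev i]; rfl
    rw [this]
    congr 2
    ext j
    simp [Pi.single_apply, eq_comm]
  have h2 := congrArg (fun w : V => (w : X → ℝ) v) h1
  simpa [Submodule.coe_sum] using h2

variable (m k : ℕ)

/-- Homogeneous polynomial functions of degree `k` on `ℝ^m`. -/
def homPoly : Submodule ℝ (Evec m → ℝ) where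
  carrier := {p | (∃ P : MvPolynomial (Fin m) ℝ, ∀ x : Evec m,
    p x = MvPolynomial.eval (fun i => x i) P) ∧ ∀ (c : ℝ) (x : Evec m), p (c • x) = c ^ k * p x}
  zero_mem' := ⟨⟨0, by simp⟩, by simp⟩
  add_mem' := by
    rintro p q ⟨⟨P, hP⟩, hp⟩ ⟨⟨Q, hQ⟩, hq⟩
    exact ⟨⟨P + Q, fun x => by simp [hP, hQ]⟩, fun c x => by simp [hp, hq, mul_add]⟩
  smul_mem' := by
    rintro a p ⟨⟨P, hP⟩, hp⟩
    exact ⟨⟨a • P, fun x => by simp [hP]⟩, fun c x => by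
      simp only [Pi.smul_apply, hp, smul_eq_mul]; ring⟩

variable {m k}

theorem contDiff_of_mem_homPoly {p : Evec m → ℝ} (hp : p ∈ homPoly m k) :
    ContDiff ℝ (⊤ : ℕ∞) p := by
  obtain ⟨⟨P, hP⟩, -⟩ := hp
  rw [funext hP]
  clear hP
  induction P using MvPolynomial.induction_on with
  | C a => simpa using contDiff_const
  | add P Q hP hQ => simpa using hP.add hQ
  | mul_X P i hP => simpa using hP.mul (contDiff_coord i)

theorem MvPolynomial.IsHomogeneous.eval_const_mul {σ : Type*} [Fintype σ]
    {P : MvPolynomial σ ℝ} {n : ℕ} (hP : P.IsHomogeneous n) (c : ℝ) (x : σ → ℝ) :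
    MvPolynomial.eval (fun i => c * x i) P = c ^ n * MvPolynomial.eval x P := by
  rw [MvPolynomial.eval_eq', MvPolynomial.eval_eq', Finset.mul_sum]
  refine Finset.sum_congr rfl fun d hd => ?_
  have hdeg : d.degree = n := by
    rw [Finsupp.degree_eq_weight_one]
    exact hP (MvPolynomial.mem_support_iff.1 hd)
  simp only [mul_pow, Finset.prod_mul_distrib, Finset.prod_pow_eq_pow_sum]
  rw [← hdeg, Finsupp.degree_eq_sum]
  ring

instance : FiniteDimensional ℝ (homPoly m k) := by
  let ev : MvPolynomial (Fin m) ℝ →ₗ[ℝ] (Evec m → ℝ) :=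
    { toFun := fun P x => MvPolynomial.eval (fun i => x i) P
      map_add' := fun P Q => by ext x; simp
      map_smul' := fun a P => by ext x; simp }
  have hle : homPoly m k ≤ (MvPolynomial.homogeneousSubmodule (Fin m) ℝ k).map ev := by
    rintro p ⟨⟨P, hP⟩, hp⟩
    refine ⟨MvPolynomial.homogeneousComponent k P,
      MvPolynomial.homogeneousComponent_isHomogeneous k P, ?_⟩
    ext x
    let N := P.totalDegree + 1
    let a : ℕ → ℝ := fun i =>
      MvPolynomial.eval (fun i => x i) (MvPolynomial.homogeneousComponent i P)
    have hpoly : ∑ i ∈ Finset.range N, Polynomial.C (a i) * Polynomial.X ^ i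
        = Polynomial.C (p x) * Polynomial.X ^ k := by
      refine Polynomial.funext fun c => ?_
      have h1 := hp c x
      rw [hP (c • x), ← MvPolynomial.sum_homogeneousComponent P, map_sum] at h1
      simp only [Polynomial.eval_finsetSum, Polynomial.eval_mul, Polynomial.eval_C,
        Polynomial.eval_pow, Polynomial.eval_X]
      rw [mul_comm, ← h1]
      refine Finset.sum_congr rfl fun i _ => ?_
      rw [mul_comm]
      exact ((MvPolynomial.homogeneousComponent_isHomogeneous i P).eval_const_mul c _).symm
    have h2 := congrArg (fun q => Polynomial.coeff q k) hpoly
    simp only [Polynomial.finsetSum_coeff, Polynomial.coeff_C_mul_X_pow, if_true,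
      Finset.sum_ite_eq, Finset.mem_range] at h2
    change a k = p x
    rw [← h2]
    split_ifs with hk
    · rfl
    · simp only [a]
      rw [MvPolynomial.homogeneousComponent_eq_zero _ _ (by omega), map_zero]
  have : FiniteDimensional ℝ (MvPolynomial.homogeneousSubmodule (Fin m) ℝ k) :=
    Module.Finite.iff_fg.2 (MvPolynomial.homogeneousSubmodule_fg _ _ k)
  exact Submodule.finiteDimensional_of_le hle

theorem homPoly_eq_zero_of_ball {q : Evec m → ℝ} (hq : q ∈ homPoly m k)
    (h : ∀ u ∈ closedBall (0 : Evec m) 1, q u = 0) : q = 0 := by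
  ext x
  have hpos : (0 : ℝ) < ‖x‖ + 1 := by positivity
  have h1 := hq.2 (‖x‖ + 1) ((‖x‖ + 1)⁻¹ • x)
  have h2 : q ((‖x‖ + 1)⁻¹ • x) = 0 := by
    refine h _ ?_
    rw [mem_closedBall_zero_iff, norm_smul, norm_inv, Real.norm_of_nonneg hpos.le,
      inv_mul_le_one₀ hpos]
    linarith
  rw [smul_inv_smul₀ hpos.ne', h2, mul_zero] at h1
  exact h1

theorem mem_homPoly_comp_linear {q : Evec m → ℝ} (hq : q ∈ homPoly m k)
    (A : Evec m →ₗ[ℝ] Evec m) : (fun v => q (A v)) ∈ homPoly m k := by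
  obtain ⟨⟨P, hP⟩, hh⟩ := hq
  refine ⟨⟨MvPolynomial.bind₁ (fun i => ∑ j, MvPolynomial.C (A (EuclideanSpace.single j 1) i)
    * MvPolynomial.X j) P, fun x => ?_⟩, fun c x => by simp only [map_smul, hh]⟩
  change q (A x) = _
  rw [hP, MvPolynomial.eval, MvPolynomial.eval, MvPolynomial.eval₂Hom_bind₁]
  congr 2
  ext i
  conv_lhs => rw [← (EuclideanSpace.basisFun (Fin m) ℝ).sum_repr x]
  simp [mul_comm]

theorem IsHk.mem_homPoly {p : Evec m → ℝ} (hp : IsHk m k p) : p ∈ homPoly m k := ⟨hp.1, hp.2.1⟩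

theorem IsHk.eulerHarmonic {p : Evec m → ℝ} (hp : IsHk m k p) : EulerHarmonic (k : ℝ) p := by
  have hs := contDiff_of_mem_homPoly hp.mem_homPoly
  refine ⟨hs, fun w => ?_, hp.2.2⟩
  rw [← fderiv_apply_eq_sum_pdv]
  have h1 : HasDerivAt (fun c : ℝ => p (c • w)) (fderiv ℝ p w w) 1 := by
    have h := (hs.differentiable (by simp) ((1 : ℝ) • w)).hasFDerivAt.comp_hasDerivAt (1 : ℝ)
      ((hasDerivAt_id (1 : ℝ)).smul_const w)
    simpa [Function.comp_def] using h
  have h2 : HasDerivAt (fun c : ℝ => p (c • w)) (k * p w) 1 := by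
    rw [funext fun c => hp.2.1 c w]
    simpa using (hasDerivAt_pow k (1 : ℝ)).mul_const (p w)
  exact h1.unique h2

variable (m k) in
/-- The space `ℋ_k`. -/
def harmPoly : Submodule ℝ (Evec m → ℝ) where
  carrier := {p | IsHk m k p}
  zero_mem' := by
    have h : ∀ i : Fin m, pdv i (0 : Evec m → ℝ) = 0 := fun i => funext fun x =>
      (HasPdvAt.const (i := i) (x := x) 0).2
    exact ⟨(homPoly m k).zero_mem.1, (homPoly m k).zero_mem.2, fun x => by simp [lapl, h]⟩
  add_mem' := by
    intro p q hp hq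
    have hm := (homPoly m k).add_mem hp.mem_homPoly hq.mem_homPoly
    refine ⟨hm.1, hm.2, fun x => ?_⟩
    have hp' := hp.eulerHarmonic
    have hq' := hq.eulerHarmonic
    have h1 : ∀ i, pdv i (p + q) = fun x => pdv i p x + pdv i q x := fun i => funext fun x =>
      ((HasPdvAt.of_differentiableAt (hp'.differentiable x)).add
        (.of_differentiableAt (hq'.differentiable x))).2
    have h2 : ∀ i, pdv i (pdv i (p + q)) x = pdv i (pdv i p) x + pdv i (pdv i q) x := by
      intro i
      rw [h1]
      exact ((HasPdvAt.of_differentiableAt ((hp'.partial_deriv i).differentiable x)).add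
        (.of_differentiableAt ((hq'.partial_deriv i).differentiable x))).2
    rw [lapl, Finset.sum_congr rfl fun i _ => h2 i, Finset.sum_add_distrib]
    exact (congrArg₂ (· + ·) (hp.2.2 x) (hq.2.2 x)).trans (add_zero 0)
  smul_mem' := by
    intro a p hp
    have hm := (homPoly m k).smul_mem a hp.mem_homPoly
    refine ⟨hm.1, hm.2, fun x => ?_⟩
    have hp' := hp.eulerHarmonic
    have h1 : ∀ i, pdv i (a • p) = fun x => a * pdv i p x := fun i => funext fun x =>
      ((HasPdvAt.of_differentiableAt (hp'.differentiable x)).const_mul a).2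
    have h2 : ∀ i, pdv i (pdv i (a • p)) x = a * pdv i (pdv i p) x := by
      intro i
      rw [h1]
      exact ((HasPdvAt.of_differentiableAt ((hp'.partial_deriv i).differentiable x)).const_mul a).2
    rw [lapl, Finset.sum_congr rfl fun i _ => h2 i, ← Finset.mul_sum]
    exact (congrArg (a * ·) (hp.2.2 x)).trans (mul_zero a)

theorem harmPoly_le_homPoly : harmPoly m k ≤ homPoly m k := fun _ hp => IsHk.mem_homPoly hp

instance : FiniteDimensional ℝ (harmPoly m k) :=
  Submodule.finiteDimensional_of_le harmPoly_le_homPoly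

end Interpolation

section HalfSpace

variable {d : ℕ}

theorem upP_castSucc (x' : Evec d) (y : ℝ) (i : Fin d) : upP d x' y i.castSucc = x' i := by
  simp [upP]

theorem upP_last (x' : Evec d) (y : ℝ) : upP d x' y (Fin.last d) = y := by
  simp [upP]

theorem upP_downP_lastP (x : Evec (d + 1)) : upP d (downP d x) (lastP d x) = x := by
  ext i
  refine Fin.lastCases ?_ (fun i => ?_) i
  · rw [upP_last, lastP]
  · rw [upP_castSucc]; simp [downP]

theorem upP_sub (x' t' : Evec d) (y : ℝ) :
    upP d x' y - upP d t' 0 = upP d (x' - t') y := by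
  ext i
  refine Fin.lastCases ?_ (fun i => ?_) i
  · simp [upP_last]
  · simp [upP_castSucc]

theorem smul_upP (c : ℝ) (x' : Evec d) (y : ℝ) : c • upP d x' y = upP d (c • x') (c * y) := by
  ext i
  refine Fin.lastCases ?_ (fun i => ?_) i
  · simp [upP_last]
  · simp [upP_castSucc]

theorem norm_upP_sq (x' : Evec d) (y : ℝ) : ‖upP d x' y‖ ^ 2 = ‖x'‖ ^ 2 + y ^ 2 := by
  simp only [EuclideanSpace.real_norm_sq_eq]
  rw [Fin.sum_univ_castSucc]
  simp [upP_last, upP_castSucc]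

theorem contDiff_upP :
    ContDiff ℝ (⊤ : ℕ∞) (fun q : Evec d × ℝ => upP d q.1 q.2) := by
  rw [contDiff_euclidean]
  refine Fin.lastCases ?_ fun i => ?_
  · simpa only [upP_last] using contDiff_snd
  · simpa only [upP_castSucc, Function.comp_def] using (contDiff_coord i).comp contDiff_fst

theorem continuous_upP_zero : Continuous fun t' : Evec d => upP d t' 0 :=
  contDiff_upP.continuous.comp (continuous_id.prodMk continuous_const)

theorem lastP_sub_upP (x : Evec (d + 1)) (t' : Evec d) : lastP d (x - upP d t' 0) = lastP d x := by
  simp [lastP, upP_last]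

theorem abs_lastP_le (x : Evec (d + 1)) : |lastP d x| ≤ ‖x‖ :=
  PiLp.norm_apply_le x (Fin.last d)

theorem sub_upP_ne_zero {x : Evec (d + 1)} (hx : 0 < lastP d x) (t' : Evec d) :
    x - upP d t' 0 ≠ 0 := by
  intro h
  have := lastP_sub_upP x t'
  rw [h] at this
  exact hx.ne (by simpa [lastP] using this)

theorem isOpen_halfSpace : IsOpen {x : Evec (d + 1) | 0 < lastP d x} :=
  isOpen_lt continuous_const (contDiff_coord (Fin.last d)).continuous

theorem integrable_inv_norm_pow {x : Evec (d + 1)} (hx : 0 < lastP d x) {s : ℕ} (hs : d + 1 ≤ s) :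
    Integrable fun t' : Evec d => (‖x - upP d t' 0‖ ^ s)⁻¹ := by
  have hr : ((Module.finrank ℝ (Evec d) : ℕ) : ℝ) < s := by
    rw [finrank_euclideanSpace_fin]; exact_mod_cast hs
  set μ := min 1 (lastP d x) with hμ
  have hμ0 : 0 < μ := lt_min one_pos hx
  have h1 := ((integrable_rpow_neg_one_add_norm_sq (μ := (volume : Measure (Evec d)))
    hr).const_mul (μ ^ s)⁻¹).comp_sub_left (downP d x)
  refine h1.mono' ?_ (Eventually.of_forall fun t' => ?_)
  · exact (((continuous_const.sub continuous_upP_zero).norm.pow s).inv₀ fun t' =>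
      pow_ne_zero _ (norm_ne_zero_iff.2 (sub_upP_ne_zero hx t'))).aestronglyMeasurable
  · have hz : ‖x - upP d t' 0‖ ^ 2 = ‖downP d x - t'‖ ^ 2 + lastP d x ^ 2 := by
      conv_lhs => rw [← upP_downP_lastP x, upP_sub, norm_upP_sq]
    set r := ‖downP d x - t'‖
    have hpos : (0 : ℝ) < 1 + r ^ 2 := by positivity
    have hsq : (μ * √(1 + r ^ 2)) ^ 2 ≤ ‖x - upP d t' 0‖ ^ 2 := by
      rw [hz, mul_pow, Real.sq_sqrt hpos.le]
      have a1 : μ ^ 2 ≤ 1 := pow_le_one₀ hμ0.le (min_le_left _ _)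
      have a2 : μ ^ 2 ≤ lastP d x ^ 2 := pow_le_pow_left₀ hμ0.le (min_le_right _ _) 2
      nlinarith [sq_nonneg r]
    have hle : μ * √(1 + r ^ 2) ≤ ‖x - upP d t' 0‖ :=
      (abs_le_of_sq_le_sq' hsq (norm_nonneg _)).2
    have hrw : (1 + r ^ 2) ^ (-(s : ℝ) / 2) = (√(1 + r ^ 2) ^ s)⁻¹ := by
      rw [Real.sqrt_eq_rpow, ← Real.rpow_natCast _ s, ← Real.rpow_mul hpos.le,
        ← Real.rpow_neg hpos.le]
      congr 1
      ring
    rw [hrw, ← mul_inv, ← mul_pow, Real.norm_of_nonneg (by positivity)]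
    gcongr

/-- The integral of `y / |x - t|^m` over the boundary does not depend on `x`. -/
theorem integral_inv_norm_pow (x' : Evec d) {y : ℝ} (hy : 0 < y) :
    ∫ t' : Evec d, (‖upP d x' y - upP d t' 0‖ ^ (d + 1))⁻¹
      = y⁻¹ * ∫ t' : Evec d, (‖upP d t' 1‖ ^ (d + 1))⁻¹ := by
  simp only [upP_sub]
  rw [integral_sub_left_eq_self (fun t' : Evec d => (‖upP d t' y‖ ^ (d + 1))⁻¹) volume x']
  have h := Measure.integral_comp_smul volume
    (fun t' : Evec d => (‖upP d t' y‖ ^ (d + 1))⁻¹) y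
  have h1 : ∀ t' : Evec d, (‖upP d (y • t') y‖ ^ (d + 1))⁻¹
      = (y ^ (d + 1))⁻¹ * (‖upP d t' 1‖ ^ (d + 1))⁻¹ := by
    intro t'
    have : upP d (y • t') y = y • upP d t' 1 := by rw [smul_upP, mul_one]
    rw [this, norm_smul, Real.norm_of_nonneg hy.le, mul_pow, mul_inv]
  simp only [h1, integral_const_mul] at h
  rw [finrank_euclideanSpace_fin, abs_of_pos (by positivity), smul_eq_mul] at h
  have hyd : y ^ d ≠ 0 := by positivity
  rw [pow_succ] at h
  field_simp at h ⊢
  linarith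

end HalfSpace

section HomogeneousKernel

variable {d : ℕ} {F : Type} [NormedAddCommGroup F] [NormedSpace ℝ F]

/-- `T` is smooth away from the origin and positively homogeneous of degree `-s`. -/
structure HomSmooth (s : ℕ) (T : Evec (d + 1) → F) : Prop where
  contDiffOn : ContDiffOn ℝ (⊤ : ℕ∞) T {0}ᶜ
  homog : ∀ c : ℝ, 0 < c → ∀ a ≠ 0, T (c • a) = (c ^ s)⁻¹ • T a

variable {s : ℕ} {T : Evec (d + 1) → F}

theorem HomSmooth.exists_bound (hT : HomSmooth s T) :
    ∃ C, 0 ≤ C ∧ ∀ a ≠ 0, ‖T a‖ ≤ C * (‖a‖ ^ s)⁻¹ := by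
  have hsub : sphere (0 : Evec (d + 1)) 1 ⊆ {0}ᶜ := fun a ha h => by
    rw [h] at ha; simp at ha
  obtain ⟨C, hC⟩ := (isCompact_sphere (0 : Evec (d + 1)) 1).exists_bound_of_continuousOn
    (hT.contDiffOn.continuousOn.mono hsub)
  refine ⟨max C 0, le_max_right _ _, fun a ha => ?_⟩
  have hn : 0 < ‖a‖ := norm_pos_iff.2 ha
  have h1 : ‖(‖a‖)⁻¹ • a‖ = 1 := by
    rw [norm_smul, norm_inv, norm_norm, inv_mul_cancel₀ hn.ne']
  have h2 := hT.homog ‖a‖ hn ((‖a‖)⁻¹ • a) (by rw [← norm_ne_zero_iff, h1]; exact one_ne_zero)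
  rw [smul_inv_smul₀ hn.ne'] at h2
  rw [h2, norm_smul, Real.norm_of_nonneg (by positivity), mul_comm]
  gcongr
  exact (hC _ (by simpa using h1)).trans (le_max_left _ _)

theorem HomSmooth.differentiableAt (hT : HomSmooth s T) {a : Evec (d + 1)} (ha : a ≠ 0) :
    DifferentiableAt ℝ T a :=
  (hT.contDiffOn.contDiffAt (isOpen_compl_singleton.mem_nhds ha)).differentiableAt (by simp)

theorem HomSmooth.fderiv (hT : HomSmooth s T) : HomSmooth (s + 1) (fderiv ℝ T) := by
  refine ⟨hT.contDiffOn.fderiv_of_isOpen isOpen_compl_singleton (by simp), fun c hc a ha => ?_⟩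
  have h1 : (fun a => T (c • a)) =ᶠ[𝓝 a] fun a => (c ^ s)⁻¹ • T a := by
    filter_upwards [isOpen_ne.mem_nhds ha] with z hz using hT.homog c hc z hz
  have h2 := h1.fderiv_eq (𝕜 := ℝ)
  rw [fderiv_comp_smul, fderiv_fun_const_smul (hT.differentiableAt ha)] at h2
  rw [pow_succ, mul_inv, mul_comm, mul_smul, ← h2, inv_smul_smul₀ hc.ne']

theorem HomSmooth.pdv {T : Evec (d + 1) → ℝ} (hT : HomSmooth s T) (i : Fin (d + 1)) :
    HomSmooth (s + 1) (pdv i T) := by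
  refine ⟨contDiffOn_pdv isOpen_compl_singleton hT.contDiffOn i, fun c hc a ha => ?_⟩
  rw [_root_.pdv, hT.fderiv.homog c hc a ha]
  rfl

/-- Convolution of the boundary density `b` with the kernel `T`. -/
def boundaryInt (b : Evec d → ℝ) (T : Evec (d + 1) → F) (x : Evec (d + 1)) : F :=
  ∫ t' : Evec d, b t' • T (x - upP d t' 0)

variable {b : Evec d → ℝ} {M : ℝ}

theorem HomSmooth.continuous_integrand (hT : HomSmooth s T) (hb : Continuous b)
    {x : Evec (d + 1)} (hx : 0 < lastP d x) : Continuous fun t' => b t' • T (x - upP d t' 0) := by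
  refine hb.smul (hT.contDiffOn.continuousOn.comp_continuous
    (continuous_const.sub continuous_upP_zero) fun t' => sub_upP_ne_zero hx t')

theorem HomSmooth.integrable (hT : HomSmooth s T) (hs : d + 1 ≤ s) (hb : Continuous b)
    (hM : ∀ t', |b t'| ≤ M) {x : Evec (d + 1)} (hx : 0 < lastP d x) :
    Integrable fun t' => b t' • T (x - upP d t' 0) := by
  obtain ⟨C, hC0, hC⟩ := hT.exists_bound
  refine ((integrable_inv_norm_pow hx hs).const_mul (M * C)).mono'
    (hT.continuous_integrand hb hx).aestronglyMeasurable (Eventually.of_forall fun t' => ?_)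
  rw [norm_smul, mul_assoc]
  have hM0 : 0 ≤ M := (abs_nonneg _).trans (hM t')
  exact mul_le_mul (hM t') (hC _ (sub_upP_ne_zero hx t')) (norm_nonneg _) hM0

theorem HomSmooth.hasFDerivAt_boundaryInt (hT : HomSmooth s T) (hs : d ≤ s)
    (hb : Continuous b) (hM : ∀ t', |b t'| ≤ M) {x : Evec (d + 1)} (hx : 0 < lastP d x)
    (hint : Integrable fun t' => b t' • T (x - upP d t' 0)) :
    HasFDerivAt (boundaryInt b T) (boundaryInt b (_root_.fderiv ℝ T) x) x := by
  obtain ⟨C, hC0, hC⟩ := hT.fderiv.exists_bound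
  have hpos : ∀ z ∈ ball x (lastP d x / 2), 0 < lastP d z := by
    intro z hz
    have h1 := abs_lastP_le (z - x)
    rw [mem_ball_iff_norm] at hz
    have h2 : lastP d (z - x) = lastP d z - lastP d x := by simp [lastP]
    rw [h2] at h1
    linarith [(abs_le.1 h1).1]
  have hM0 : 0 ≤ M := (abs_nonneg _).trans (hM 0)
  refine hasFDerivAt_integral_of_dominated_of_fderiv_le
    (F := fun z t' => b t' • T (z - upP d t' 0))
    (F' := fun z t' => b t' • _root_.fderiv ℝ T (z - upP d t' 0))
    (bound := fun t' => M * (C * 2 ^ (s + 1)) * (‖x - upP d t' 0‖ ^ (s + 1))⁻¹)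
    (ball_mem_nhds x (half_pos hx)) ?_ hint
    (hT.fderiv.continuous_integrand hb hx).aestronglyMeasurable
    (Eventually.of_forall fun t' z hz => ?_)
    ((integrable_inv_norm_pow hx (Nat.succ_le_succ hs)).const_mul _)
    (Eventually.of_forall fun t' z hz => ?_)
  · filter_upwards [ball_mem_nhds x (half_pos hx)] with z hz
    exact (hT.continuous_integrand hb (hpos z hz)).aestronglyMeasurable
  · rw [norm_smul, mul_assoc]
    refine mul_le_mul (hM t') ((hC _ (sub_upP_ne_zero (hpos z hz) t')).trans ?_)
      (norm_nonneg _) hM0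
    have h1 : lastP d x ≤ ‖x - upP d t' 0‖ := by
      rw [← lastP_sub_upP x t']
      exact (le_abs_self _).trans (abs_lastP_le _)
    have h2 : ‖x - upP d t' 0‖ ≤ ‖z - upP d t' 0‖ + ‖z - x‖ := by
      rw [← norm_neg (z - x), neg_sub]
      calc _ = ‖(z - upP d t' 0) + (x - z)‖ := by congr 1; abel
        _ ≤ _ := norm_add_le _ _
    rw [mem_ball_iff_norm] at hz
    have h3 : ‖x - upP d t' 0‖ / 2 ≤ ‖z - upP d t' 0‖ := by linarith
    have hxp : 0 < ‖x - upP d t' 0‖ := hx.trans_le h1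
    calc C * (‖z - upP d t' 0‖ ^ (s + 1))⁻¹ ≤ C * ((‖x - upP d t' 0‖ / 2) ^ (s + 1))⁻¹ := by
          gcongr
      _ = _ := by rw [div_pow, inv_div]; ring
  · have h1 := (hT.differentiableAt (sub_upP_ne_zero (hpos z hz) t')).hasFDerivAt
    have h2 : HasFDerivAt (fun z => z - upP d t' 0) (ContinuousLinearMap.id ℝ _) z :=
      (hasFDerivAt_id z).sub_const _
    exact (h1.comp z h2).const_smul (b t')

theorem HomSmooth.contDiffOn_boundaryInt_nat (hb : Continuous b) (hM : ∀ t', |b t'| ≤ M)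
    (n : ℕ) : ∀ {F : Type} [NormedAddCommGroup F] [NormedSpace ℝ F] {s : ℕ}
      {T : Evec (d + 1) → F}, HomSmooth s T → d + 1 ≤ s →
      ContDiffOn ℝ n (boundaryInt b T) {x | 0 < lastP d x} := by
  induction n with
  | zero =>
    intro F _ _ s T hT hs
    refine contDiffOn_zero.2 fun x hx => ContinuousAt.continuousWithinAt ?_
    exact (hT.hasFDerivAt_boundaryInt (by omega) hb hM hx (hT.integrable hs hb hM hx)).continuousAt
  | succ n ih =>
    intro F _ _ s T hT hs
    have hd : ∀ x ∈ {x | 0 < lastP d x}, HasFDerivAt (boundaryInt b T)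
        (boundaryInt b (_root_.fderiv ℝ T) x) x := fun x hx =>
      hT.hasFDerivAt_boundaryInt (by omega) hb hM hx (hT.integrable hs hb hM hx)
    push_cast
    refine (contDiffOn_succ_iff_fderiv_of_isOpen isOpen_halfSpace).2
      ⟨fun x hx => (hd x hx).differentiableAt.differentiableWithinAt, by simp, ?_⟩
    exact (ih hT.fderiv (by omega)).congr fun x hx => (hd x hx).fderiv

theorem HomSmooth.contDiffOn_boundaryInt (hT : HomSmooth s T) (hs : d ≤ s)
    (hb : Continuous b) (hM : ∀ t', |b t'| ≤ M)
    (hint : ∀ x, 0 < lastP d x → Integrable fun t' => b t' • T (x - upP d t' 0)) :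
    ContDiffOn ℝ (⊤ : ℕ∞) (boundaryInt b T) {x | 0 < lastP d x} := by
  have hd : ∀ x ∈ {x | 0 < lastP d x}, HasFDerivAt (boundaryInt b T)
      (boundaryInt b (_root_.fderiv ℝ T) x) x := fun x hx =>
    hT.hasFDerivAt_boundaryInt hs hb hM hx (hint x hx)
  refine (contDiffOn_infty_iff_fderiv_of_isOpen isOpen_halfSpace).2
    ⟨fun x hx => (hd x hx).differentiableAt.differentiableWithinAt, ?_⟩
  refine contDiffOn_infty.2 fun n => ?_
  exact (HomSmooth.contDiffOn_boundaryInt_nat hb hM n hT.fderiv (by omega)).congr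
    fun x hx => (hd x hx).fderiv

theorem HomSmooth.pdv_boundaryInt {T : Evec (d + 1) → ℝ} (hT : HomSmooth s T) (hs : d ≤ s)
    (hb : Continuous b) (hM : ∀ t', |b t'| ≤ M) {x : Evec (d + 1)} (hx : 0 < lastP d x)
    (hint : Integrable fun t' => b t' • T (x - upP d t' 0)) (i : Fin (d + 1)) :
    _root_.pdv i (boundaryInt b T) x = boundaryInt b (_root_.pdv i T) x := by
  rw [_root_.pdv, (hT.hasFDerivAt_boundaryInt hs hb hM hx hint).fderiv, boundaryInt,
    ContinuousLinearMap.integral_apply (hT.fderiv.integrable (by omega) hb hM hx)]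
  rfl

theorem HomSmooth.pdv_pdv_boundaryInt {T : Evec (d + 1) → ℝ} (hT : HomSmooth s T) (hs : d ≤ s)
    (hb : Continuous b) (hM : ∀ t', |b t'| ≤ M)
    (hint : ∀ x, 0 < lastP d x → Integrable fun t' => b t' • T (x - upP d t' 0))
    {x : Evec (d + 1)} (hx : 0 < lastP d x) (i j : Fin (d + 1)) :
    _root_.pdv i (_root_.pdv j (boundaryInt b T)) x
      = boundaryInt b (_root_.pdv i (_root_.pdv j T)) x := by
  have h : _root_.pdv j (boundaryInt b T) =ᶠ[𝓝 x] boundaryInt b (_root_.pdv j T) := by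
    filter_upwards [isOpen_halfSpace.mem_nhds hx] with z hz
    exact hT.pdv_boundaryInt hs hb hM hz (hint z hz) j
  rw [_root_.pdv, h.fderiv_eq]
  exact (hT.pdv j).pdv_boundaryInt (by omega) hb hM hx
    ((hT.pdv j).integrable (by omega) hb hM hx) i

end HomogeneousKernel

section PoissonIntegral

variable {d k : ℕ}

/-- The coefficient `a_m |a|^{-m} p(R_a w)` of the half-space Poisson kernel, `m = d + 1`. -/
def poissonCoeff (p : Evec (d + 1) → ℝ) (w a : Evec (d + 1)) : ℝ :=
  a (Fin.last d) * (‖a‖ ^ (d + 1))⁻¹ * p (reflv a w)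

theorem reflv_smul_left {m : ℕ} {c : ℝ} (hc : 0 < c) (a w : Evec m) :
    reflv (c • a) w = reflv a w := by
  rcases eq_or_ne a 0 with rfl | ha
  · simp
  · have hn : ‖a‖ ≠ 0 := norm_ne_zero_iff.2 ha
    rw [reflv, reflv, real_inner_smul_left, norm_smul, Real.norm_of_nonneg hc.le, smul_smul]
    congr 2
    field_simp

theorem homSmooth_inv_norm_pow_mul_reflv {p : Evec (d + 1) → ℝ} (hp : ContDiff ℝ (⊤ : ℕ∞) p)
    (w : Evec (d + 1)) :
    HomSmooth (d + 1) fun a : Evec (d + 1) => (‖a‖ ^ (d + 1))⁻¹ * p (reflv a w) := by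
  refine ⟨?_, fun c hc a _ => ?_⟩
  · exact ContDiffOn.comp (f := fun a => (a, w))
      (JointSmooth.mul_comp_reflv (contDiffOn_inv_norm_pow (d + 1)) hp)
      (contDiff_id.prodMk contDiff_const).contDiffOn fun a ha => ⟨ha, trivial⟩
  · rw [reflv_smul_left hc, norm_smul, Real.norm_of_nonneg hc.le, mul_pow, mul_inv, smul_eq_mul,
      mul_assoc]

theorem homSmooth_poissonCoeff {p : Evec (d + 1) → ℝ} (hp : ContDiff ℝ (⊤ : ℕ∞) p)
    (w : Evec (d + 1)) : HomSmooth d (poissonCoeff p w) := by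
  have hS := homSmooth_inv_norm_pow_mul_reflv hp w
  have he : poissonCoeff p w = fun a => a (Fin.last d) *
      ((‖a‖ ^ (d + 1))⁻¹ * p (reflv a w)) := funext fun a => mul_assoc _ _ _
  rw [he]
  refine ⟨(contDiff_coord (Fin.last d)).contDiffOn.mul hS.contDiffOn, fun c hc a ha => ?_⟩
  have := hS.homog c hc a ha
  simp only [PiLp.smul_apply, smul_eq_mul] at this ⊢
  rw [this]
  field_simp
  ring

variable {b : Evec d → ℝ} {M : ℝ}

theorem integrable_poissonCoeff {p : Evec (d + 1) → ℝ} (hp : ContDiff ℝ (⊤ : ℕ∞) p)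
    (w : Evec (d + 1)) (hb : Continuous b) (hM : ∀ t', |b t'| ≤ M) (x : Evec (d + 1))
    (hx : 0 < lastP d x) : Integrable fun t' => b t' • poissonCoeff p w (x - upP d t' 0) := by
  refine (((homSmooth_inv_norm_pow_mul_reflv hp w).integrable le_rfl hb hM hx).const_mul
    (lastP d x)).congr (Eventually.of_forall fun t' => ?_)
  have : (x - upP d t' 0) (Fin.last d) = lastP d x := lastP_sub_upP x t'
  simp only [poissonCoeff, smul_eq_mul, this]
  ring

/-- The boundary integrals of the Poisson kernel against scalar densities are annihilated by the
bosonic Laplacian. -/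
theorem sum_pdv_pdv_boundaryInt_mul_bosonicSymbol (hm : 3 ≤ d + 1) (hk : 1 ≤ k)
    {p : Evec (d + 1) → ℝ} (hp : IsHk (d + 1) k p) {N : ℕ} {w : Fin N → Evec (d + 1)}
    {r : Fin N → Evec (d + 1) → ℝ} (hr : ∀ i, r i ∈ homPoly (d + 1) k)
    (hwr : ∀ q ∈ homPoly (d + 1) k, ∀ v, q v = ∑ i, q (w i) * r i v)
    (hb : Continuous b) (hM : ∀ t', |b t'| ≤ M) {x : Evec (d + 1)} (hx : 0 < lastP d x)
    (v : Evec (d + 1)) :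
    ∑ i, ∑ e, ∑ e', pdv e (pdv e' (boundaryInt b (poissonCoeff p (w i)))) x
      * bosonicSymbol k e e' (r i) v = 0 := by
  have hps : ContDiff ℝ (⊤ : ℕ∞) p := contDiff_of_mem_homPoly hp.mem_homPoly
  have hT := fun i => homSmooth_poissonCoeff hps (w i)
  have hKer : ∀ a ≠ 0, ∑ i, ∑ e, ∑ e', pdv e (pdv e' (poissonCoeff p (w i))) a
      * bosonicSymbol k e e' (r i) v = 0 := by
    intro a ha
    rw [← Dk_sum_mul isOpen_compl_singleton k (fun i _ => (hT i).contDiffOn)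
      (fun i _ => contDiff_of_mem_homPoly (hr i)) a ha v]
    rw [← Dk_poissonKernel (Fin.last d) k hm hk hp.eulerHarmonic ha v]
    congr 1
    ext z u
    have hz : (fun u => p (reflv z u)) ∈ homPoly (d + 1) k := by
      rw [reflv_eq_reflection]
      exact mem_homPoly_comp_linear hp.mem_homPoly
        ((ℝ ∙ z)ᗮ.reflection.toLinearEquiv : Evec (d + 1) →ₗ[ℝ] Evec (d + 1))
    have : p (reflv z u) = ∑ i, p (reflv z (w i)) * r i u := hwr _ hz u
    rw [this, Finset.mul_sum]
    exact Finset.sum_congr rfl fun i _ => by rw [poissonCoeff]; ring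
  have hI : ∀ i e e', Integrable fun t' =>
      b t' • pdv e (pdv e' (poissonCoeff p (w i))) (x - upP d t' 0) := fun i e e' =>
    (((hT i).pdv e').pdv e).integrable (by omega) hb hM hx
  calc _ = ∑ i, ∑ e, ∑ e', ∫ t', b t' • pdv e (pdv e' (poissonCoeff p (w i))) (x - upP d t' 0)
          * bosonicSymbol k e e' (r i) v := by
        refine Finset.sum_congr rfl fun i _ => Finset.sum_congr rfl fun e _ =>
          Finset.sum_congr rfl fun e' _ => ?_
        rw [(hT i).pdv_pdv_boundaryInt le_rfl hb hM (integrable_poissonCoeff hps (w i) hb hM) hx,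
          boundaryInt, ← integral_mul_const]
    _ = ∫ t', ∑ i, ∑ e, ∑ e', b t' • pdv e (pdv e' (poissonCoeff p (w i))) (x - upP d t' 0)
          * bosonicSymbol k e e' (r i) v := by
        have hJ : ∀ i e e', Integrable fun t' =>
            b t' • pdv e (pdv e' (poissonCoeff p (w i))) (x - upP d t' 0)
              * bosonicSymbol k e e' (r i) v := fun i e e' =>
          (hI i e e').mul_const (bosonicSymbol k e e' (r i) v)
        rw [integral_finsetSum _ fun i _ => integrable_finsetSum _ fun e _ =>
          integrable_finsetSum _ fun e' _ => hJ i e e']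
        refine Finset.sum_congr rfl fun i _ => ?_
        rw [integral_finsetSum _ fun e _ => integrable_finsetSum _ fun e' _ => hJ i e e']
        refine Finset.sum_congr rfl fun e _ => ?_
        rw [integral_finsetSum _ fun e' _ => hJ i e e']
    _ = 0 := by
        refine integral_eq_zero_of_ae (Eventually.of_forall fun t' => ?_)
        have h := hKer _ (sub_upP_ne_zero hx t')
        refine Eq.trans ?_ ((congrArg (b t' * ·) h).trans (mul_zero _))
        simp only [Finset.mul_sum, mul_assoc, smul_eq_mul]

theorem ae_sphereM_norm_eq_one (m : ℕ) : ∀ᵐ u ∂(sphereM m), ‖u‖ = 1 := by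
  rw [sphereM, ae_map_iff measurable_subtype_coe.aemeasurable
    (measurableSet_eq_fun measurable_norm measurable_const)]
  exact Eventually.of_forall fun u => by simp

variable {Z : Evec (d + 1) → Evec (d + 1) → ℝ}

theorem IsZk.reflv_left {m : ℕ} {Z : Evec m → Evec m → ℝ} (hZ : IsZk m k Z) (a u v : Evec m) :
    Z (reflv a u) v = Z u (reflv a v) := by
  have h := hZ.2.2.2.2 (ℝ ∙ a)ᗮ.reflection u (reflv a v)
  rw [← reflv_eq_reflection] at h
  rw [← h, reflv_reflv]

/-- The reproducing property evaluates the spherical integral in `P_H[f]`. -/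
theorem integral_PH_mul (hZ : IsZk (d + 1) k Z) {f q : Evec (d + 1) → ℝ}
    (hq : IsHk (d + 1) k q) (hf : ∀ u ∈ closedBall (0 : Evec (d + 1)) 1, f u = q u)
    (x' : Evec d) (y : ℝ) (t' : Evec d) (v : Evec (d + 1)) :
    ∫ u, PH d k Z x' y t' u v * f u ∂(sphereM (d + 1))
      = cmk (d + 1) k * (y / ‖upP d x' y - upP d t' 0‖ ^ (d + 1))
        * q (reflv (upP d x' y - upP d t' 0) v) := by
  rw [← hZ.2.1 q hq, ← integral_const_mul]
  refine integral_congr_ae ?_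
  filter_upwards [ae_sphereM_norm_eq_one (d + 1)] with u hu
  rw [PH, hf u (by simp [hu]), hZ.reflv_left, mul_assoc]

/-- Finite expansion of the Poisson integral into smooth coefficients depending on the base point
and polynomials in the fibre variable. -/
theorem exists_expansion_PHint (hm : 3 ≤ d + 1) (hk : 1 ≤ k) (hZ : IsZk (d + 1) k Z)
    {f : Evec d → Evec (d + 1) → ℝ}
    (hfc : ContinuousOn (fun q : Evec d × Evec (d + 1) => f q.1 q.2)
      (Set.univ ×ˢ closedBall (0 : Evec (d + 1)) 1))
    (hM : ∀ (x' : Evec d) (u : Evec (d + 1)), ‖u‖ ≤ 1 → |f x' u| ≤ M)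
    (hf : ∀ x' : Evec d, ∃ q, IsHk (d + 1) k q ∧
      ∀ u ∈ closedBall (0 : Evec (d + 1)) 1, f x' u = q u) :
    ∃ (N : ℕ) (N' : ℕ) (h : Fin N × Fin N' → Evec (d + 1) → ℝ)
      (r : Fin N × Fin N' → Evec (d + 1) → ℝ),
      (∀ a, ContDiffOn ℝ (⊤ : ℕ∞) (h a) {x | 0 < lastP d x}) ∧
      (∀ a, ContDiff ℝ (⊤ : ℕ∞) (r a)) ∧
      (∀ x, 0 < lastP d x → ∀ v,
        PHint d k Z f (downP d x) (lastP d x) v = ∑ a, h a x * r a v) ∧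
      (∀ x, 0 < lastP d x → ∀ v, ∑ a, ∑ i, ∑ j,
        pdv i (pdv j (h a)) x * bosonicSymbol k i j (r a) v = 0) := by
  obtain ⟨N, u, p, hu, hp, hup⟩ := exists_interpolation (harmPoly (d + 1) k)
    (S := closedBall 0 1) fun q hq => homPoly_eq_zero_of_ball (harmPoly_le_homPoly hq)
  obtain ⟨N', w, r, -, hr, hwr⟩ := exists_interpolation (homPoly (d + 1) k)
    (S := closedBall 0 1) fun q hq => homPoly_eq_zero_of_ball hq
  have hps : ∀ j, ContDiff ℝ (⊤ : ℕ∞) (p j) := fun j =>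
    contDiff_of_mem_homPoly (harmPoly_le_homPoly (hp j))
  set c := cmk (d + 1) k with hc
  let b : Fin N → Evec d → ℝ := fun j t' => c * f t' (u j)
  have hb : ∀ j, Continuous (b j) := fun j => continuous_const.mul
    (hfc.comp_continuous (f := fun t' => (t', u j)) (by fun_prop) fun t' => ⟨trivial, hu j⟩)
  have hbM : ∀ j t', |b j t'| ≤ |c| * M := fun j t' => by
    simp only [b, abs_mul]
    exact mul_le_mul_of_nonneg_left (hM t' _ (by simpa using hu j)) (abs_nonneg _)
  refine ⟨N, N', fun a => boundaryInt (b a.1) (poissonCoeff (p a.1) (w a.2)), fun a => r a.2,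
    fun a => (homSmooth_poissonCoeff (hps a.1) (w a.2)).contDiffOn_boundaryInt le_rfl (hb a.1)
      (hbM a.1) (integrable_poissonCoeff (hps a.1) (w a.2) (hb a.1) (hbM a.1)),
    fun a => contDiff_of_mem_homPoly (hr a.2), fun x hx v => ?_, fun x hx v => ?_⟩
  · have hI : ∀ j i, Integrable fun t' =>
        b j t' • poissonCoeff (p j) (w i) (x - upP d t' 0) * r i v := fun j i =>
      (integrable_poissonCoeff (hps j) (w i) (hb j) (hbM j) x hx).mul_const (r i v)
    have hpt : ∀ t', ∫ u, PH d k Z (downP d x) (lastP d x) t' u v * f t' u ∂(sphereM (d + 1))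
        = ∑ j, ∑ i, b j t' • poissonCoeff (p j) (w i) (x - upP d t' 0) * r i v := by
      intro t'
      obtain ⟨q, hq, hfq⟩ := hf t'
      rw [integral_PH_mul hZ hq hfq, upP_downP_lastP]
      set z := x - upP d t' 0 with hz
      have hzl : z (Fin.last d) = lastP d x := lastP_sub_upP x t'
      have hpj : ∀ j, p j (reflv z v) = ∑ i, p j (reflv z (w i)) * r i v := by
        intro j
        have : (fun u => p j (reflv z u)) ∈ homPoly (d + 1) k := by
          rw [reflv_eq_reflection]
          exact mem_homPoly_comp_linear (harmPoly_le_homPoly (hp j))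
            ((ℝ ∙ z)ᗮ.reflection.toLinearEquiv : Evec (d + 1) →ₗ[ℝ] Evec (d + 1))
        exact hwr _ this v
      rw [hup q hq (reflv z v), Finset.mul_sum]
      refine Finset.sum_congr rfl fun j _ => ?_
      rw [hpj, Finset.mul_sum, Finset.mul_sum]
      refine Finset.sum_congr rfl fun i _ => ?_
      simp only [b, poissonCoeff, hzl, smul_eq_mul, hfq _ (hu j)]
      ring
    rw [PHint, integral_congr_ae (Eventually.of_forall hpt), integral_finsetSum _ fun j _ =>
      integrable_finsetSum _ fun i _ => hI j i, Fintype.sum_prod_type]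
    refine Finset.sum_congr rfl fun j _ => ?_
    rw [integral_finsetSum _ fun i _ => hI j i]
    exact Finset.sum_congr rfl fun i _ => integral_mul_const _ _
  · rw [Fintype.sum_prod_type]
    exact Finset.sum_eq_zero fun j _ => sum_pdv_pdv_boundaryInt_mul_bosonicSymbol hm hk (hp j)
      hr hwr (hb j) (hbM j) hx v

theorem abs_PHint_le (hZ : IsZk (d + 1) k Z) {f : Evec d → Evec (d + 1) → ℝ}
    (hM : ∀ (x' : Evec d) (u : Evec (d + 1)), ‖u‖ ≤ 1 → |f x' u| ≤ M)
    (hf : ∀ x' : Evec d, ∃ q, IsHk (d + 1) k q ∧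
      ∀ u ∈ closedBall (0 : Evec (d + 1)) 1, f x' u = q u)
    (x' : Evec d) {y : ℝ} (hy : 0 < y) {v : Evec (d + 1)} (hv : ‖v‖ ≤ 1) :
    |PHint d k Z f x' y v|
      ≤ |cmk (d + 1) k| * (∫ t' : Evec d, (‖upP d t' 1‖ ^ (d + 1))⁻¹) * M := by
  have hx : 0 < lastP d (upP d x' y) := by rwa [lastP, upP_last]
  have h := norm_integral_le_of_norm_le (μ := volume)
    (f := fun t' => ∫ u, PH d k Z x' y t' u v * f t' u ∂(sphereM (d + 1)))
    ((integrable_inv_norm_pow hx (le_refl (d + 1))).const_mul (|cmk (d + 1) k| * y * M))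
    (Eventually.of_forall fun t' => ?_)
  · rw [integral_const_mul, integral_inv_norm_pow x' hy] at h
    refine h.trans (le_of_eq ?_)
    field_simp
  · obtain ⟨q, hq, hfq⟩ := hf t'
    rw [integral_PH_mul hZ hq hfq, Real.norm_eq_abs, abs_mul, abs_mul, abs_div, abs_of_pos hy,
      abs_of_nonneg (by positivity : 0 ≤ ‖upP d x' y - upP d t' 0‖ ^ (d + 1))]
    have hv' : ‖reflv (upP d x' y - upP d t' 0) v‖ ≤ 1 := by rwa [norm_reflv]
    have hqM := hM t' _ hv'
    rw [hfq _ (by simpa using hv')] at hqM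
    calc _ ≤ |cmk (d + 1) k| * (y / ‖upP d x' y - upP d t' 0‖ ^ (d + 1)) * M := by gcongr
      _ = _ := by rw [div_eq_mul_inv]; ring

end PoissonIntegral

/-- Dirichlet problem in the upper half-space with continuous bounded
data: smoothness, `𝒟_k P_H[f] = 0`, and the sup-norm bound with a constant depending
only on `m` and `k`. Here `m = d+1 ≥ 3`. -/
theorem stmt_2 (d k : ℕ) (hm : 3 ≤ d + 1) (hk : 1 ≤ k)
    (Z : Evec (d + 1) → Evec (d + 1) → ℝ) (hZ : IsZk (d + 1) k Z) :
    ∃ a : ℝ, 0 < a ∧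
      ∀ f : Evec d → Evec (d + 1) → ℝ,
        ContinuousOn (fun q : Evec d × Evec (d + 1) => f q.1 q.2)
          (Set.univ ×ˢ closedBall (0 : Evec (d + 1)) 1) →
        (∃ M : ℝ, ∀ (x' : Evec d) (u : Evec (d + 1)), ‖u‖ ≤ 1 → |f x' u| ≤ M) →
        (∀ x' : Evec d, ∃ q, IsHk (d + 1) k q ∧
          ∀ u ∈ closedBall (0 : Evec (d + 1)) 1, f x' u = q u) →
        (ContDiffOn ℝ (⊤ : ℕ∞)
            (fun q : (Evec d × ℝ) × Evec (d + 1) => PHint d k Z f q.1.1 q.1.2 q.2)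
            {q : (Evec d × ℝ) × Evec (d + 1) | 0 < q.1.2 ∧ ‖q.2‖ < 1}) ∧
        (∀ x : Evec (d + 1), 0 < lastP d x → ∀ v : Evec (d + 1), ‖v‖ < 1 →
          Dk (d + 1) k (fun x₁ v₁ => PHint d k Z f (downP d x₁) (lastP d x₁) v₁) x v = 0) ∧
        (∀ M : ℝ, (∀ (x' : Evec d) (u : Evec (d + 1)), ‖u‖ ≤ 1 → |f x' u| ≤ M) →
          ∀ (x' : Evec d) (y : ℝ) (v : Evec (d + 1)), 0 < y → ‖v‖ < 1 →
            |PHint d k Z f x' y v| ≤ a * M) := by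
  have hC : 0 ≤ ∫ t' : Evec d, (‖upP d t' 1‖ ^ (d + 1))⁻¹ :=
    integral_nonneg fun t' => by positivity
  refine ⟨|cmk (d + 1) k| * (∫ t' : Evec d, (‖upP d t' 1‖ ^ (d + 1))⁻¹) + 1, by positivity,
    fun f hfc ⟨M₀, hM₀⟩ hf => ?_⟩
  obtain ⟨N, N', h, r, hh, hr, hg, hD⟩ := exists_expansion_PHint hm hk hZ hfc hM₀ hf
  refine ⟨?_, fun x hx v _ => ?_, fun M hM x' y v hy hv => ?_⟩
  · have hsm : ContDiffOn ℝ (⊤ : ℕ∞)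
        (fun q : (Evec d × ℝ) × Evec (d + 1) => ∑ a, h a (upP d q.1.1 q.1.2) * r a q.2)
        {q : (Evec d × ℝ) × Evec (d + 1) | 0 < q.1.2 ∧ ‖q.2‖ < 1} := by
      refine ContDiffOn.sum fun a _ => ContDiffOn.mul ?_ ((hr a).comp contDiff_snd).contDiffOn
      refine (hh a).comp (contDiff_upP.comp contDiff_fst).contDiffOn fun q hq => ?_
      simpa [lastP, upP_last] using hq.1
    refine hsm.congr fun q hq => ?_
    have hl : lastP d (upP d q.1.1 q.1.2) = q.1.2 := upP_last _ _
    have hdn : downP d (upP d q.1.1 q.1.2) = q.1.1 := by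
      ext i
      simp [downP, upP_castSucc]
    have := hg (upP d q.1.1 q.1.2) (by rw [hl]; exact hq.1) q.2
    rwa [hl, hdn] at this
  · rw [Dk_congr isOpen_halfSpace k (f := fun x v => ∑ a, h a x * r a v) hg x hx v,
      Dk_sum_mul isOpen_halfSpace k (fun a _ => hh a) (fun a _ => hr a) x hx v]
    exact hD x hx v
  · have hM0 : 0 ≤ M := (abs_nonneg _).trans (hM x' 0 (by simp))
    have := abs_PHint_le hZ hM hf x' hy hv.le
    linarith
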